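/- arXiv:1612.04008 — 4 statements merged into one kernel-verified Lean document; each statement's English description precedes it below -/
import Mathlib

section
/- For every ε > 0 there exist a constant C > 0 and an integer l_0 such that for all integers l ≥ l_0, all m, all i, all j ∈ {1,…,n}, and all admissible P^i, Λ_i: | ∫_{ℝ^n} K(x/λ) U_{P^i,Λ_i}(x)^{(n+2s)/(n−2s)} (∂U_{P^i,Λ_i}/∂P^i_j)(x) dx − (n−2s) C_0^{2n/(n−2s)} β a_j Λ_i^{−(β−2)} λ^{−β} ( ∫_{ℝ^n} |x_1|^β (1+|x|²)^{−(n+1)} dx ) (P^i_j − X^i_j) | ≤ C |P^i − X^i|² λ^{−β} + ε λ^{−β}. -/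
/-- `X` enumerates the lattice points `{d·q : q ∈ ([0,m+1)^k × {0}) ∩ ℤ^n}` (with spacing `d = λl`). -/
def latticeEnum (n k m : ℕ) (d : ℝ)
    (X : Fin ((m + 1) ^ k) → EuclideanSpace ℝ (Fin n)) : Prop :=
  Function.Injective X ∧
  (∀ i, ∃ q : Fin n → ℤ,
      (∀ j : Fin n, (j : ℕ) < k → 0 ≤ q j ∧ q j ≤ (m : ℤ)) ∧
      (∀ j : Fin n, k ≤ (j : ℕ) → q j = 0) ∧
      (∀ j : Fin n, X i j = d * (q j : ℝ))) ∧
  (∀ q : Fin n → ℤ,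
      (∀ j : Fin n, (j : ℕ) < k → 0 ≤ q j ∧ q j ≤ (m : ℤ)) →
      (∀ j : Fin n, k ≤ (j : ℕ) → q j = 0) →
      ∃ i, ∀ j : Fin n, X i j = d * (q j : ℝ))

/-- Conditions (H₁)–(H₃) on `K`, with `K(0) = 1`: positivity and boundedness, `C^{1,1}`
regularity, `1`-periodicity in the first `k` variables, and the expansion
`K(x) = 1 + Σ aᵢ|xᵢ|^β + R(x)` near the critical point `0`. -/
def KHyp (n k : ℕ) (β : ℝ) (a : Fin n → ℝ)
    (K : EuclideanSpace ℝ (Fin n) → ℝ) : Prop :=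
  (∃ K₀ K₁ : ℝ, 0 < K₀ ∧ ∀ x, K₀ ≤ K x ∧ K x ≤ K₁) ∧
  ContDiff ℝ 1 K ∧ (∃ L : NNReal, LipschitzWith L (fderiv ℝ K)) ∧
  (∀ x : EuclideanSpace ℝ (Fin n), ∀ j : Fin n, (j : ℕ) < k →
      K (x + EuclideanSpace.single j (1 : ℝ)) = K x) ∧
  K 0 = 1 ∧ fderiv ℝ K 0 = 0 ∧
  (∀ i, a i ≠ 0) ∧ (∑ i, a i) < 0 ∧
  ∃ R : EuclideanSpace ℝ (Fin n) → ℝ,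
    (∀ᶠ x in nhds 0, K x = 1 + (∑ i, a i * |x i| ^ β) + R x) ∧
    ContDiff ℝ (⌊β⌋₊ - 1 : ℕ) R ∧
    (∃ L : NNReal, LipschitzWith L (iteratedFDeriv ℝ (⌊β⌋₊ - 1) R)) ∧
    Filter.Tendsto
      (fun y : EuclideanSpace ℝ (Fin n) =>
        ∑ j ∈ Finset.range (⌊β⌋₊ + 1), ‖iteratedFDeriv ℝ j R y‖ * ‖y‖ ^ (-β + (j : ℝ)))
      (nhdsWithin 0 {0}ᶜ) (nhds 0)

open MeasureTheory


theorem aux_hasDeriv (q : ℝ) (hq : 0 < q) (t : ℝ) :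
    HasDerivAt (fun t : ℝ => |t| ^ q * t) ((q + 1) * |t| ^ q) t := by
  rcases eq_or_ne t 0 with rfl | ht
  · rw [hasDerivAt_iff_tendsto_slope_zero]
    have h : Filter.Tendsto (fun t : ℝ => |t| ^ q) (nhdsWithin 0 {0}ᶜ) (nhds 0) := by
      have : Continuous (fun t : ℝ => |t| ^ q) := continuous_abs.rpow_const (fun _ => Or.inr hq.le)
      have := this.tendsto 0
      simp only [abs_zero, Real.zero_rpow hq.ne'] at this
      exact this.mono_left nhdsWithin_le_nhds
    simp only [abs_zero, Real.zero_rpow hq.ne', mul_zero]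
    refine h.congr' ?_
    filter_upwards [self_mem_nhdsWithin] with x hx
    have hx : x ≠ 0 := hx
    simp only [zero_add, smul_eq_mul, sub_zero]
    field_simp
  · have h1 := (hasDerivAt_abs ht).rpow_const (p := q) (Or.inl (abs_ne_zero.2 ht))
    have h2 := h1.mul (hasDerivAt_id t)
    refine h2.congr_deriv ?_
    have h3 : |t| ^ q = |t| ^ (q - 1) * |t| := by
      rw [← Real.rpow_add_one (abs_ne_zero.2 ht)]; ring_nf
    have h4 : (SignType.sign t : ℝ) * t = |t| := by
      exact sign_mul_self t
    simp only [id]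
    linear_combination (q * |t| ^ (q-1)) * h4 - q * h3

theorem aux_taylor (β : ℝ) (hβ : 2 < β) (t p : ℝ) (hp : |p| ≤ 1) :
    |(|t + p| ^ β - |t| ^ β - β * (|t| ^ (β - 2) * t) * p)|
      ≤ β * (β - 1) * p ^ 2 * (1 + |t|) ^ (β - 2) := by
  have key : ∀ r : ℝ, |r| ≤ |p| → |(|t + r| ^ (β - 2) * (t + r) - |t| ^ (β - 2) * t)|
      ≤ (β - 1) * (1 + |t|) ^ (β - 2) * |p| := by
    intro r hr
    have := (convex_Icc (-|p|) |p|).norm_image_sub_le_of_norm_hasDerivWithin_le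
      (f := fun r => |t + r| ^ (β - 2) * (t + r))
      (f' := fun r => (β - 2 + 1) * |t + r| ^ (β - 2))
      (C := (β - 1) * (1 + |t|) ^ (β - 2)) (x := 0) (y := r)
      (fun x _ => ((aux_hasDeriv (β - 2) (by linarith) (t + x)).comp_const_add t x).hasDerivWithinAt)
      (by
        intro x hx
        have hx : |x| ≤ |p| := abs_le.2 hx
        have h0 : 0 ≤ |t + x| ^ (β - 2) := by positivity
        rw [Real.norm_eq_abs, abs_of_nonneg (mul_nonneg (by linarith) h0)]
        have : |t + x| ≤ 1 + |t| := by
          have := abs_add_le t x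
          linarith
        have := Real.rpow_le_rpow (abs_nonneg _) this (by linarith : 0 ≤ β - 2)
        nlinarith)
      (by simp) (abs_le.1 hr)
    simp only [add_zero, sub_zero, Real.norm_eq_abs] at this
    refine this.trans ?_
    have h0 : 0 ≤ (1 + |t|) ^ (β - 2) := by positivity
    exact mul_le_mul_of_nonneg_left hr (mul_nonneg (by linarith) h0)
  have := (convex_Icc (-|p|) |p|).norm_image_sub_le_of_norm_hasDerivWithin_le
      (f := fun r => |t + r| ^ β - β * (|t| ^ (β - 2) * t) * r)
      (f' := fun r => β * |t + r| ^ (β - 2) * (t + r) - β * (|t| ^ (β - 2) * t))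
      (C := β * ((β - 1) * (1 + |t|) ^ (β - 2) * |p|)) (x := 0) (y := p)
      (fun x _ => ((((hasDerivAt_abs_rpow (t + x) (by linarith)).comp_const_add t x)).sub
        ((((hasDerivAt_id x).const_mul (β * (|t| ^ (β - 2) * t)))).congr_deriv (mul_one _))).hasDerivWithinAt)
      (by
        intro x hx
        have hx : |x| ≤ |p| := abs_le.2 hx
        have := key x hx
        rw [Real.norm_eq_abs, mul_assoc, ← mul_sub, abs_mul, abs_of_pos (by linarith : 0 < β)]
        exact mul_le_mul_of_nonneg_left this (by linarith))
      (by simp) (abs_le.1 le_rfl)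
  simp only [add_zero, sub_zero, Real.norm_eq_abs, mul_zero] at this
  rw [← sq_abs p]
  calc _ = |(|t + p| ^ β - β * (|t| ^ (β - 2) * t) * p - |t| ^ β)| := by ring_nf
    _ ≤ _ := this
    _ = _ := by ring

theorem aux_integrand (n : ℕ) (s C₀ L : ℝ) (hns : 0 < (n : ℝ) - 2 * s) (hC₀ : 0 < C₀) (hL : 0 < L)
    (x P : EuclideanSpace ℝ (Fin n)) (j : Fin n) :
    (C₀ * (L / (1 + L ^ 2 * ‖x - P‖ ^ 2)) ^ (((n : ℝ) - 2 * s) / 2)) ^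
        (((n : ℝ) + 2 * s) / ((n : ℝ) - 2 * s)) *
      deriv (fun b : ℝ =>
        C₀ * (L / (1 + L ^ 2 * ‖x - (P + b • EuclideanSpace.single j (1 : ℝ))‖ ^ 2)) ^
                      (((n : ℝ) - 2 * s) / 2)) 0 =
    ((n : ℝ) - 2 * s) * C₀ ^ (2 * (n : ℝ) / ((n : ℝ) - 2 * s)) * L ^ ((n : ℝ) + 2) *
      ((x - P) j * (1 + L ^ 2 * ‖x - P‖ ^ 2) ^ (-((n : ℝ) + 1))) := by
  set y := x - P with hy
  set τ := ((n : ℝ) - 2 * s) / 2 with hτ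
  set Q := 1 + L ^ 2 * ‖y‖ ^ 2 with hQ
  have hQ0 : 0 < Q := by positivity
  have hfun : ∀ b : ℝ, 1 + L ^ 2 * ‖x - (P + b • EuclideanSpace.single j (1 : ℝ))‖ ^ 2
      = Q + L ^ 2 * (b ^ 2 - 2 * y j * b) := by
    intro b
    have : x - (P + b • EuclideanSpace.single j (1 : ℝ)) = y - b • EuclideanSpace.single j (1 : ℝ) := by
      rw [hy]; abel
    rw [this, norm_sub_sq_real, inner_smul_right, EuclideanSpace.inner_single_right, norm_smul]
    simp [hQ]
    ring
  have hQd : HasDerivAt (fun b : ℝ => Q + L ^ 2 * (b ^ 2 - 2 * y j * b)) (L ^ 2 * (- 2 * y j)) 0 := by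
    have := ((((hasDerivAt_id (0:ℝ)).pow 2).sub ((hasDerivAt_id (0:ℝ)).const_mul (2 * y j))).const_mul (L ^ 2)).const_add Q
    refine this.congr_deriv ?_
    simp
  have hd : HasDerivAt (fun b : ℝ =>
        C₀ * (L / (1 + L ^ 2 * ‖x - (P + b • EuclideanSpace.single j (1 : ℝ))‖ ^ 2)) ^ τ)
      (C₀ * (L ^ τ * ((2 * τ) * Q ^ (-τ - 1) * (L ^ 2 * y j)))) 0 := by
    have h1 := ((hQd.rpow_const (p := -τ) (Or.inl (by simpa using hQ0.ne'))).const_mul (L ^ τ)).const_mul C₀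
    refine (h1.congr_deriv ?_).congr_of_eventuallyEq ?_
    · have hz : Q + L ^ 2 * ((0:ℝ) ^ 2 - 2 * y j * 0) = Q := by ring
      rw [hz]; ring
    · filter_upwards with b
      rw [hfun b]
      have hp : 0 < Q + L ^ 2 * (b ^ 2 - 2 * y j * b) := by rw [← hfun b]; positivity
      rw [Real.div_rpow hL.le hp.le, Real.rpow_neg hp.le, div_eq_mul_inv]
  rw [hd.deriv, Real.mul_rpow hC₀.le (by positivity), ← Real.rpow_mul (by positivity),
    Real.div_rpow hL.le hQ0.le]
  have e1 : τ * (((n : ℝ) + 2 * s) / ((n : ℝ) - 2 * s)) = ((n : ℝ) + 2 * s) / 2 := by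
    rw [hτ]; field_simp
  have e2 : C₀ ^ (2 * (n : ℝ) / ((n : ℝ) - 2 * s)) = C₀ ^ (((n : ℝ) + 2 * s) / ((n : ℝ) - 2 * s)) * C₀ := by
    rw [← Real.rpow_add_one hC₀.ne']; congr 1; field_simp; ring
  have e3 : L ^ ((n : ℝ) + 2) = L ^ (((n : ℝ) + 2 * s) / 2) * L ^ τ * L ^ 2 := by
    rw [← Real.rpow_add hL, ← Real.rpow_natCast L 2, ← Real.rpow_add hL]; congr 1; rw [hτ]; push_cast; ring
  have e4 : Q ^ (-((n : ℝ) + 1)) = (Q ^ (((n : ℝ) + 2 * s) / 2))⁻¹ * Q ^ (-τ - 1) := by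
    rw [← Real.rpow_neg hQ0.le, ← Real.rpow_add hQ0]; congr 1; rw [hτ]; ring
  have e5 : 2 * τ = (n : ℝ) - 2 * s := by rw [hτ]; ring
  rw [e1, e2, e3, e4, e5, div_eq_mul_inv]
  ring

theorem aux_scale (n : ℕ) (β L : ℝ) (hL : 0 < L) (hn0 : 0 < n) (j : Fin n) :
    L ^ ((n : ℝ) + 2) * (∫ y : EuclideanSpace ℝ (Fin n),
        |y j| ^ β * (1 + L ^ 2 * ‖y‖ ^ 2) ^ (-((n : ℝ) + 1))) =
      L ^ (-(β - 2)) * ∫ x : EuclideanSpace ℝ (Fin n),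
        |x ⟨0, hn0⟩| ^ β * (1 + ‖x‖ ^ 2) ^ (-((n : ℝ) + 1)) := by
  have h1 : (∫ x : EuclideanSpace ℝ (Fin n), |x ⟨0, hn0⟩| ^ β * (1 + ‖x‖ ^ 2) ^ (-((n : ℝ) + 1)))
      = ∫ x : EuclideanSpace ℝ (Fin n), |x j| ^ β * (1 + ‖x‖ ^ 2) ^ (-((n : ℝ) + 1)) := by
    let e := LinearIsometryEquiv.piLpCongrLeft 2 ℝ ℝ (Equiv.swap j ⟨0, hn0⟩)
    have := e.measurePreserving.integral_comp e.toHomeomorph.measurableEmbedding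
      (fun x : EuclideanSpace ℝ (Fin n) => |x j| ^ β * (1 + ‖x‖ ^ 2) ^ (-((n : ℝ) + 1)))
    rw [← this]
    congr 1
    ext x
    rw [e.norm_map]
    congr 3
    simp [e, LinearIsometryEquiv.piLpCongrLeft_apply, Equiv.piCongrLeft'_apply]
  have h2 := Measure.integral_comp_smul (volume : Measure (EuclideanSpace ℝ (Fin n)))
    (fun x : EuclideanSpace ℝ (Fin n) => |x j| ^ β * (1 + ‖x‖ ^ 2) ^ (-((n : ℝ) + 1))) L
  rw [h1]
  simp only [finrank_euclideanSpace, Fintype.card_fin, smul_eq_mul, norm_smul, PiLp.smul_apply,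
    abs_mul, Real.norm_eq_abs, mul_pow, abs_of_pos hL, Real.mul_rpow hL.le (abs_nonneg _),
    mul_assoc, integral_const_mul] at h2
  rw [abs_of_pos (by positivity)] at h2
  set I1 := ∫ y : EuclideanSpace ℝ (Fin n), |y j| ^ β * (1 + L ^ 2 * ‖y‖ ^ 2) ^ (-((n : ℝ) + 1))
  set I2 := ∫ y : EuclideanSpace ℝ (Fin n), |y j| ^ β * (1 + ‖y‖ ^ 2) ^ (-((n : ℝ) + 1))
  have e1 : I1 = L ^ (-β) * ((L ^ n)⁻¹ * I2) := by
    rw [← h2, ← mul_assoc, ← Real.rpow_add hL]; simp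
  have e2 : L ^ (-(β - 2)) = L ^ ((n : ℝ) + 2) * (L ^ (-β) * (L ^ n)⁻¹) := by
    rw [← Real.rpow_natCast L n, ← Real.rpow_neg hL.le, ← Real.rpow_add hL, ← Real.rpow_add hL]
    congr 1; ring
  rw [e1, e2]; ring

theorem aux_odd (n : ℕ) (j : Fin n) (L : ℝ) (F : EuclideanSpace ℝ (Fin n) → ℝ)
    (hF : ∀ x y : EuclideanSpace ℝ (Fin n), (∀ i, i ≠ j → x i = y i) → x j = - y j → F x = F y) :
    (∫ y : EuclideanSpace ℝ (Fin n), F y * (y j * (1 + L ^ 2 * ‖y‖ ^ 2) ^ (-((n : ℝ) + 1)))) = 0 := by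
  let e : EuclideanSpace ℝ (Fin n) ≃ₗᵢ[ℝ] EuclideanSpace ℝ (Fin n) :=
    LinearIsometryEquiv.piLpCongrRight 2
    (fun i => if i = j then LinearIsometryEquiv.neg ℝ (E := ℝ) else LinearIsometryEquiv.refl ℝ ℝ)
  have hj : ∀ y, e y j = - y j := by intro y; simp [e]
  have hi : ∀ y i, i ≠ j → e y i = y i := by intro y i hi; simp [e, hi]
  have := e.measurePreserving.integral_comp e.toHomeomorph.measurableEmbedding
      (fun y => F y * (y j * (1 + L ^ 2 * ‖y‖ ^ 2) ^ (-((n : ℝ) + 1))))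
  have h2 : ∀ y, F (e y) * (e y j * (1 + L ^ 2 * ‖e y‖ ^ 2) ^ (-((n : ℝ) + 1)))
     = - (F y * (y j * (1 + L ^ 2 * ‖y‖ ^ 2) ^ (-((n : ℝ) + 1)))) := by
    intro y
    rw [hF (e y) y (hi y) (hj y), e.norm_map, hj]; ring
  simp only [h2, integral_neg] at this
  linarith

theorem aux_dom (n : ℕ) (β C₁ : ℝ) (hC₁ : 0 < C₁) (hβ : β < n) :
    ∃ A > (0 : ℝ), ∀ L : ℝ, C₁ ≤ L → ∀ j : Fin n, ∀ F : EuclideanSpace ℝ (Fin n) → ℝ,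
      Continuous F → ∀ c : ℝ, 0 ≤ c → (∀ y, |F y| ≤ c * (1 + ‖y‖) ^ (β + 1 / 2)) →
      Integrable (fun y : EuclideanSpace ℝ (Fin n) =>
          F y * (y j * (1 + L ^ 2 * ‖y‖ ^ 2) ^ (-((n : ℝ) + 1)))) ∧
      |∫ y : EuclideanSpace ℝ (Fin n),
          F y * (y j * (1 + L ^ 2 * ‖y‖ ^ 2) ^ (-((n : ℝ) + 1)))| ≤ c * A := by
  set κ : ℝ := min 1 (C₁ ^ 2) / 2 with hκ
  have hκ0 : 0 < κ := by positivity
  have hInt : Integrable (fun y : EuclideanSpace ℝ (Fin n) => (1 + ‖y‖) ^ (-((n : ℝ) + 1 / 2))) :=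
    integrable_one_add_norm (by simp)
  set B := ∫ y : EuclideanSpace ℝ (Fin n), (1 + ‖y‖) ^ (-((n : ℝ) + 1 / 2)) with hB
  have hB0 : 0 ≤ B := integral_nonneg (fun y => by positivity)
  refine ⟨κ ^ (-((n : ℝ) + 1)) * B + 1, by positivity, ?_⟩
  intro L hL j F hF c hc hFc
  have hpt : ∀ y : EuclideanSpace ℝ (Fin n),
      ‖F y * (y j * (1 + L ^ 2 * ‖y‖ ^ 2) ^ (-((n : ℝ) + 1)))‖
        ≤ c * κ ^ (-((n : ℝ) + 1)) * (1 + ‖y‖) ^ (-((n : ℝ) + 1 / 2)) := by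
    intro y
    have hw : 0 < 1 + ‖y‖ := by positivity
    have h1 : |y j| ≤ 1 + ‖y‖ := by
      have := PiLp.norm_apply_le y j
      rw [Real.norm_eq_abs] at this; linarith
    have h2 : κ * (1 + ‖y‖) ^ 2 ≤ 1 + L ^ 2 * ‖y‖ ^ 2 := by
      have m1 : κ ≤ 1 / 2 := by rw [hκ]; linarith [min_le_left 1 (C₁ ^ 2)]
      have m2 : κ ≤ L ^ 2 / 2 := by
        have : C₁ ^ 2 ≤ L ^ 2 := pow_le_pow_left₀ hC₁.le hL 2
        rw [hκ]; linarith [min_le_right 1 (C₁ ^ 2)]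
      have : κ * (1 + ‖y‖) ^ 2 ≤ κ * (2 * (1 + ‖y‖ ^ 2)) :=
        mul_le_mul_of_nonneg_left (by nlinarith [sq_nonneg (1 - ‖y‖)]) hκ0.le
      nlinarith [mul_le_mul_of_nonneg_right m2 (sq_nonneg ‖y‖)]
    have h3 : (1 + L ^ 2 * ‖y‖ ^ 2) ^ (-((n : ℝ) + 1)) ≤
        κ ^ (-((n : ℝ) + 1)) * (1 + ‖y‖) ^ (-(2 * (n : ℝ) + 2)) := by
      refine (Real.rpow_le_rpow_of_nonpos (by positivity) h2 (by linarith [(Nat.cast_nonneg n : (0:ℝ) ≤ n)])).trans ?_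
      rw [Real.mul_rpow hκ0.le (by positivity), ← Real.rpow_natCast (1 + ‖y‖) 2, ← Real.rpow_mul hw.le]
      apply le_of_eq; congr 2; push_cast; ring
    have h4 : (0:ℝ) ≤ (1 + L ^ 2 * ‖y‖ ^ 2) ^ (-((n : ℝ) + 1)) := by positivity
    rw [norm_mul, norm_mul, Real.norm_eq_abs, Real.norm_eq_abs, Real.norm_eq_abs, abs_of_nonneg h4]
    calc _ ≤ (c * (1 + ‖y‖) ^ (β + 1 / 2)) * ((1 + ‖y‖) * (κ ^ (-((n : ℝ) + 1)) * (1 + ‖y‖) ^ (-(2 * (n : ℝ) + 2)))) := by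
            gcongr
            exact hFc y
      _ = c * κ ^ (-((n : ℝ) + 1)) * ((1 + ‖y‖) ^ (β + 1 / 2) * (1 + ‖y‖) ^ (1:ℝ) * (1 + ‖y‖) ^ (-(2 * (n : ℝ) + 2))) := by
            rw [Real.rpow_one]; ring
      _ ≤ _ := by
            rw [← Real.rpow_add hw, ← Real.rpow_add hw]
            refine mul_le_mul_of_nonneg_left ?_ (by positivity)
            exact Real.rpow_le_rpow_of_exponent_le (by linarith [norm_nonneg y]) (by linarith)
  have hcont : Continuous (fun y : EuclideanSpace ℝ (Fin n) =>
          F y * (y j * (1 + L ^ 2 * ‖y‖ ^ 2) ^ (-((n : ℝ) + 1)))) := by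
    refine hF.mul (Continuous.mul (by fun_prop) (Continuous.rpow_const (by fun_prop) ?_))
    intro y; left; positivity
  have hi2 := hInt.const_mul (c * κ ^ (-((n : ℝ) + 1)))
  refine ⟨hi2.mono' hcont.aestronglyMeasurable (Filter.Eventually.of_forall hpt), ?_⟩
  have := norm_integral_le_of_norm_le hi2 (Filter.Eventually.of_forall hpt)
  rw [integral_const_mul, ← hB, Real.norm_eq_abs] at this
  refine this.trans ?_
  nlinarith

theorem aux_err (n k : ℕ) (β : ℝ) (hβ : 0 < β) (a : Fin n → ℝ) (K : EuclideanSpace ℝ (Fin n) → ℝ)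
    (hK : KHyp n k β a K) (η : ℝ) (hη : 0 < η) :
    ∃ M ≥ (0 : ℝ), ∀ x, |K x - 1 - ∑ i, a i * |x i| ^ β| ≤ η * ‖x‖ ^ β + M * ‖x‖ ^ (β + 1 / 2) := by
  obtain ⟨⟨K₀, K₁, hK₀, hKb⟩, -, -, -, hK0, -, -, -, R, hR, -, -, hlim⟩ := hK
  rw [Metric.tendsto_nhds] at hlim
  have h1 := hlim η hη
  rw [eventually_nhdsWithin_iff] at h1
  obtain ⟨δ, hδ, hball⟩ := Metric.eventually_nhds_iff.1 (h1.and hR)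
  set S := ∑ i, |a i| with hS
  have hS0 : 0 ≤ S := by positivity
  have hK1 : 0 ≤ K₁ := by linarith [hKb 0]
  have hsum : ∀ x : EuclideanSpace ℝ (Fin n), |∑ i, a i * |x i| ^ β| ≤ S * ‖x‖ ^ β := by
    intro x
    refine (Finset.abs_sum_le_sum_abs _ _).trans ?_
    rw [hS, Finset.sum_mul]
    refine Finset.sum_le_sum (fun i _ => ?_)
    rw [abs_mul, abs_of_nonneg (by positivity : 0 ≤ |x i| ^ β)]
    have := PiLp.norm_apply_le x i
    rw [Real.norm_eq_abs] at this
    gcongr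
  refine ⟨(K₁ + 1) * δ ^ (-(β + 1 / 2)) + S * δ ^ (-(1 / 2 : ℝ)), by positivity, ?_⟩
  intro x
  by_cases hx : ‖x‖ < δ
  · have hM : 0 ≤ ((K₁ + 1) * δ ^ (-(β + 1 / 2)) + S * δ ^ (-(1 / 2 : ℝ))) * ‖x‖ ^ (β + 1 / 2) := by positivity
    obtain ⟨hb1, hb2⟩ := hball (y := x) (by simpa using hx)
    by_cases hx0 : x = 0
    · subst hx0
      have : |K 0 - 1 - ∑ i, a i * |(0 : EuclideanSpace ℝ (Fin n)) i| ^ β| = 0 := by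
        simp [hK0, Real.zero_rpow hβ.ne']
      rw [this]
      positivity
    · have hb := hb1 hx0
      have hxp : 0 < ‖x‖ := norm_pos_iff.2 hx0
      rw [Real.dist_eq, sub_zero] at hb
      have hle := Finset.single_le_sum (f := fun j => ‖iteratedFDeriv ℝ j R x‖ * ‖x‖ ^ (-β + (j : ℝ)))
        (s := Finset.range (⌊β⌋₊ + 1)) (fun i _ => by positivity) (Finset.mem_range.2 (Nat.succ_pos _) : 0 ∈ _)
      have hlt := (hle.trans (le_abs_self _)).trans_lt hb
      simp only [norm_iteratedFDeriv_zero, Nat.cast_zero, add_zero, Real.norm_eq_abs] at hlt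
      have : |R x| ≤ η * ‖x‖ ^ β := by
        rw [Real.rpow_neg hxp.le, ← div_eq_mul_inv, div_lt_iff₀ (by positivity)] at hlt
        exact hlt.le
      have e : K x - 1 - ∑ i, a i * |x i| ^ β = R x := by rw [hb2]; ring
      rw [e]; linarith
  · push Not at hx
    have hxp : 0 < ‖x‖ := hδ.trans_le hx
    have hη0 : 0 ≤ η * ‖x‖ ^ β := by positivity
    have b1 : |K x - 1| ≤ K₁ + 1 := by
      rw [abs_le]; constructor <;> linarith [hKb x]
    have b2 := hsum x
    have b3 : 1 ≤ δ ^ (-(β + 1 / 2)) * ‖x‖ ^ (β + 1 / 2) := by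
      rw [Real.rpow_neg hδ.le, ← div_eq_inv_mul, one_le_div (by positivity)]
      gcongr
    have b4 : ‖x‖ ^ β ≤ δ ^ (-(1 / 2 : ℝ)) * ‖x‖ ^ (β + 1 / 2) := by
      rw [Real.rpow_add hxp, Real.rpow_neg hδ.le, ← div_eq_inv_mul, le_div_iff₀ (by positivity)]
      gcongr
    have b5 := mul_le_mul_of_nonneg_left b3 (by linarith : 0 ≤ K₁ + 1)
    have b6 := mul_le_mul_of_nonneg_left b4 hS0
    have := abs_sub (K x - 1) (∑ i, a i * |x i| ^ β)
    nlinarith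

theorem aux_per (n k : ℕ) (K : EuclideanSpace ℝ (Fin n) → ℝ)
    (h : ∀ x : EuclideanSpace ℝ (Fin n), ∀ j : Fin n, (j : ℕ) < k →
      K (x + EuclideanSpace.single j (1 : ℝ)) = K x) (q : Fin n → ℤ)
    (hq : ∀ j : Fin n, k ≤ (j : ℕ) → q j = 0) (x v : EuclideanSpace ℝ (Fin n))
    (hv : ∀ j, v j = q j) : K (x + v) = K x := by
  have key : ∀ S : Finset (Fin n), K (x + ∑ i ∈ S, q i • EuclideanSpace.single i (1 : ℝ)) = K x := by
    intro S
    induction S using Finset.induction_on with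
    | empty => simp
    | insert i S hi ih =>
      rw [Finset.sum_insert hi, add_comm (q i • _), ← add_assoc]
      by_cases hik : (i : ℕ) < k
      · have hp : Function.Periodic K (EuclideanSpace.single i (1 : ℝ)) := fun x => h x i hik
        rw [hp.zsmul (q i), ih]
      · rw [hq i (by omega), zero_smul, add_zero, ih]
  have hv' : v = ∑ i, q i • EuclideanSpace.single i (1 : ℝ) := by
    ext j
    simp [hv, Finset.sum_apply, Pi.single_apply]
  rw [hv']; exact key _

theorem aux_core (n k : ℕ) (β C₁ : ℝ) (hC₁ : 0 < C₁) (hβ2 : 2 < β) (hβ : β < n)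
    (a : Fin n → ℝ) (K : EuclideanSpace ℝ (Fin n) → ℝ) (hK : KHyp n k β a K) :
    ∃ A > (0 : ℝ), ∀ η > (0 : ℝ), ∃ M ≥ (0 : ℝ), ∀ lam > (0 : ℝ), ∀ L : ℝ, C₁ ≤ L →
      ∀ p : EuclideanSpace ℝ (Fin n), ‖p‖ < 1 / 2 → ∀ j : Fin n,
      |(∫ y : EuclideanSpace ℝ (Fin n), K (lam⁻¹ • (y + p)) *
            (y j * (1 + L ^ 2 * ‖y‖ ^ 2) ^ (-((n : ℝ) + 1)))) -
          lam ^ (-β) * (a j * β * p j * ∫ y : EuclideanSpace ℝ (Fin n),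
            |y j| ^ β * (1 + L ^ 2 * ‖y‖ ^ 2) ^ (-((n : ℝ) + 1)))| ≤
        lam ^ (-β) * (|a j| * (β * (β - 1) * ‖p‖ ^ 2) + η + M * lam ^ (-(1 / 2 : ℝ))) * A := by
  obtain ⟨A, hA, hdom⟩ := aux_dom n β C₁ hC₁ hβ
  refine ⟨A, hA, fun η hη => ?_⟩
  obtain ⟨M, hM, herr⟩ := aux_err n k β (by linarith) a K hK η hη
  refine ⟨M, hM, ?_⟩
  intro lam hlam L hL p hp j
  have hKc : Continuous K := hK.2.1.continuous
  have hlb : 0 < lam ^ (-β) := by positivity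
  set g : EuclideanSpace ℝ (Fin n) → ℝ := fun y => y j * (1 + L ^ 2 * ‖y‖ ^ 2) ^ (-((n : ℝ) + 1)) with hg
  set r : Fin n → ℝ := fun i => if i = j then 0 else p i with hr
  set F0 : EuclideanSpace ℝ (Fin n) → ℝ := fun y => K (lam⁻¹ • (y + p)) with hF0
  set F1 : EuclideanSpace ℝ (Fin n) → ℝ :=
    fun y => 1 + lam ^ (-β) * ∑ i, a i * |y i + r i| ^ β with hF1
  set F2 : EuclideanSpace ℝ (Fin n) → ℝ :=
    fun y => lam ^ (-β) * (a j * β * p j) * (|y j| ^ (β - 2) * y j) with hF2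
  have hcoord : ∀ (y : EuclideanSpace ℝ (Fin n)) i, |y i| ≤ ‖y‖ := fun y i => by
    simpa [Real.norm_eq_abs] using PiLp.norm_apply_le y i
  have hri : ∀ i, |r i| ≤ 1 / 2 := by
    intro i
    by_cases h : i = j
    · simp [hr, h]
    · simp only [hr, h, if_false]; linarith [hcoord p i]
  have hw1 : ∀ y : EuclideanSpace ℝ (Fin n), 1 ≤ 1 + ‖y‖ := fun y => by linarith [norm_nonneg y]
  have hpow : ∀ (y : EuclideanSpace ℝ (Fin n)) (t e : ℝ), 0 ≤ t → t ≤ 1 + ‖y‖ → 0 ≤ e → e ≤ β + 1 / 2 →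
      t ^ e ≤ (1 + ‖y‖) ^ (β + 1 / 2) := by
    intro y t e ht hty he hle
    exact (Real.rpow_le_rpow ht hty he).trans (Real.rpow_le_rpow_of_exponent_le (hw1 y) hle)
  have c0 : Continuous F0 := hKc.comp (by fun_prop)
  have c1 : Continuous F1 := by
    refine continuous_const.add (continuous_const.mul (continuous_finsetSum _ fun i _ => continuous_const.mul ?_))
    exact Continuous.rpow_const (by fun_prop) (fun _ => Or.inr (by linarith))
  have c2 : Continuous F2 := by
    refine continuous_const.mul (Continuous.mul ?_ (by fun_prop))
    exact Continuous.rpow_const (by fun_prop) (fun _ => Or.inr (by linarith))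
  -- bounds
  have b1 : ∀ y, |F1 y| ≤ (1 + lam ^ (-β) * ∑ i, |a i|) * (1 + ‖y‖) ^ (β + 1 / 2) := by
    intro y
    have h1 : 1 ≤ (1 + ‖y‖) ^ (β + 1 / 2) := Real.one_le_rpow (hw1 y) (by linarith)
    have h2 : |∑ i, a i * |y i + r i| ^ β| ≤ (∑ i, |a i|) * (1 + ‖y‖) ^ (β + 1 / 2) := by
      refine (Finset.abs_sum_le_sum_abs _ _).trans ?_
      rw [Finset.sum_mul]
      refine Finset.sum_le_sum fun i _ => ?_
      rw [abs_mul, abs_of_nonneg (by positivity : 0 ≤ |y i + r i| ^ β)]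
      refine mul_le_mul_of_nonneg_left (hpow y _ β (abs_nonneg _) ?_ (by linarith) (by linarith)) (abs_nonneg _)
      linarith [abs_add_le (y i) (r i), hcoord y i, hri i]
    have h3 := mul_le_mul_of_nonneg_left h2 hlb.le
    calc |F1 y| ≤ |1| + |lam ^ (-β) * ∑ i, a i * |y i + r i| ^ β| := abs_add_le _ _
      _ = 1 + lam ^ (-β) * |∑ i, a i * |y i + r i| ^ β| := by rw [abs_mul, abs_of_pos hlb, abs_one]
      _ ≤ _ := by rw [add_mul, one_mul, mul_assoc]; linarith
  have b2 : ∀ y, |F2 y| ≤ |lam ^ (-β) * (a j * β * p j)| * (1 + ‖y‖) ^ (β + 1 / 2) := by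
    intro y
    rw [hF2]; simp only
    rw [abs_mul]
    refine mul_le_mul_of_nonneg_left ?_ (abs_nonneg _)
    rw [abs_mul, abs_of_nonneg (by positivity : 0 ≤ |y j| ^ (β - 2))]
    have : |y j| ^ (β - 2) * |y j| = |y j| ^ (β - 1) := by
      rw [← Real.rpow_add_one' (abs_nonneg _) (by linarith)]; congr 1; ring
    rw [this]
    exact hpow y _ _ (abs_nonneg _) (by linarith [hcoord y j]) (by linarith) (by linarith)
  have b3 : ∀ y, |F0 y - F1 y - F2 y| ≤
      (lam ^ (-β) * (|a j| * (β * (β - 1) * ‖p‖ ^ 2) + η + M * lam ^ (-(1 / 2 : ℝ)))) *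
        (1 + ‖y‖) ^ (β + 1 / 2) := by
    intro y
    set W := (1 + ‖y‖) ^ (β + 1 / 2) with hW
    set D := |y j + p j| ^ β - |y j| ^ β - β * (|y j| ^ (β - 2) * y j) * p j with hD
    have hli : 0 < lam⁻¹ := inv_pos.2 hlam
    have hDb : |D| ≤ β * (β - 1) * ‖p‖ ^ 2 * W := by
      refine (aux_taylor β hβ2 (y j) (p j) (by linarith [hcoord p j])).trans ?_
      have hpp : (p j) ^ 2 ≤ ‖p‖ ^ 2 := by
        rw [← sq_abs]; exact pow_le_pow_left₀ (abs_nonneg _) (hcoord p j) 2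
      have hww : (1 + |y j|) ^ (β - 2) ≤ W :=
        hpow y _ _ (by positivity) (by linarith [hcoord y j]) (by linarith) (by linarith)
      have hb0 : 0 ≤ β * (β - 1) := mul_nonneg (by linarith) (by linarith)
      gcongr
    have hE := herr (lam⁻¹ • (y + p))
    have hyp : ‖y + p‖ ≤ 1 + ‖y‖ := by linarith [norm_add_le y p]
    have hnorm : ∀ e : ℝ, ‖lam⁻¹ • (y + p)‖ ^ e = lam ^ (-e) * ‖y + p‖ ^ e := by
      intro e
      rw [norm_smul, Real.norm_eq_abs, abs_of_pos hli, Real.mul_rpow hli.le (norm_nonneg _),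
        Real.inv_rpow hlam.le, Real.rpow_neg hlam.le]
    have hsc : ∀ i, |(lam⁻¹ • (y + p)) i| ^ β = lam ^ (-β) * |y i + p i| ^ β := by
      intro i
      rw [PiLp.smul_apply, PiLp.add_apply, smul_eq_mul, abs_mul, abs_of_pos hli,
        Real.mul_rpow hli.le (abs_nonneg _), Real.inv_rpow hlam.le, Real.rpow_neg hlam.le]
    have hsum : (∑ i, a i * |(lam⁻¹ • (y + p)) i| ^ β) =
        lam ^ (-β) * ∑ i, a i * |y i + p i| ^ β := by
      rw [Finset.mul_sum]
      exact Finset.sum_congr rfl fun i _ => by rw [hsc]; ring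
    have hdiff : (∑ i, a i * |y i + p i| ^ β) - (∑ i, a i * |y i + r i| ^ β)
        = a j * (|y j + p j| ^ β - |y j| ^ β) := by
      rw [← Finset.sum_sub_distrib, Finset.sum_eq_single j]
      · simp [hr]; ring
      · intro i _ hij
        simp [hr, hij]
      · simp
    rw [hsum, hnorm, hnorm] at hE
    have hsplit : F0 y - F1 y - F2 y =
        (K (lam⁻¹ • (y + p)) - 1 - lam ^ (-β) * ∑ i, a i * |y i + p i| ^ β) + lam ^ (-β) * (a j * D) := by
      simp only [hF0, hF1, hF2, hD]
      linear_combination (lam ^ (-β)) * hdiff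
    have hexp : lam ^ (-(β + 1 / 2)) = lam ^ (-β) * lam ^ (-(1 / 2 : ℝ)) := by
      rw [← Real.rpow_add hlam]; congr 1; ring
    have p1 : ‖y + p‖ ^ β ≤ W := hpow y _ _ (norm_nonneg _) hyp (by linarith) (by linarith)
    have p2 : ‖y + p‖ ^ (β + 1 / 2) ≤ W := hpow y _ _ (norm_nonneg _) hyp (by linarith) le_rfl
    rw [hsplit]
    calc _ ≤ _ := abs_add_le _ _
      _ ≤ (η * (lam ^ (-β) * W) + M * (lam ^ (-(β + 1 / 2)) * W)) +
          lam ^ (-β) * (|a j| * (β * (β - 1) * ‖p‖ ^ 2 * W)) := by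
        refine add_le_add (hE.trans ?_) ?_
        · gcongr
        · rw [abs_mul, abs_mul, abs_of_pos hlb]
          gcongr
      _ = _ := by rw [hexp]; ring
  have hc3 : 0 ≤ lam ^ (-β) * (|a j| * (β * (β - 1) * ‖p‖ ^ 2) + η + M * lam ^ (-(1 / 2 : ℝ))) := by
    have hb0 : 0 ≤ β * (β - 1) := mul_nonneg (by linarith) (by linarith)
    positivity
  obtain ⟨i1, -⟩ := hdom L hL j F1 c1 _ (by positivity) b1
  obtain ⟨i2, -⟩ := hdom L hL j F2 c2 _ (by positivity) b2
  obtain ⟨i3, e3⟩ := hdom L hL j (fun y => F0 y - F1 y - F2 y) ((c0.sub c1).sub c2) _ hc3 b3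
  have z1 : (∫ y, F1 y * g y) = 0 := by
    refine aux_odd n j L F1 ?_
    intro x y hxy hj
    simp only [hF1]
    congr 2
    refine Finset.sum_congr rfl fun i _ => ?_
    by_cases hi : i = j
    · subst hi; simp [hr, hj]
    · rw [hxy i hi]
  have z2 : (∫ y, F2 y * g y) = lam ^ (-β) * (a j * β * p j * ∫ y : EuclideanSpace ℝ (Fin n),
            |y j| ^ β * (1 + L ^ 2 * ‖y‖ ^ 2) ^ (-((n : ℝ) + 1))) := by
    rw [← mul_assoc, ← integral_const_mul]
    congr 1
    ext y
    have : |y j| ^ β = |y j| ^ (β - 2) * (y j * y j) := by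
      rw [← abs_mul_abs_self (y j), ← sq, ← Real.rpow_natCast |y j| 2,
        ← Real.rpow_add' (abs_nonneg _) (by push_cast; linarith)]
      congr 1; push_cast; ring
    simp only [hF2, hg]
    rw [this]; ring
  have hsum : (∫ y, F0 y * g y) = (∫ y, F1 y * g y) + (∫ y, F2 y * g y) +
      ∫ y, (F0 y - F1 y - F2 y) * g y := by
    have j1 : Integrable (fun y => F1 y * g y) := i1
    have j2 : Integrable (fun y => F2 y * g y) := i2
    have j3 : Integrable (fun y => (F0 y - F1 y - F2 y) * g y) := i3
    have j12 : Integrable (fun y => F1 y * g y + F2 y * g y) := j1.add j2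
    rw [← integral_add j1 j2, ← integral_add j12 j3]
    congr 1
    ext y
    ring
  rw [z1, z2, zero_add] at hsum
  have : (∫ y, F0 y * g y) - lam ^ (-β) * (a j * β * p j * ∫ y : EuclideanSpace ℝ (Fin n),
            |y j| ^ β * (1 + L ^ 2 * ‖y‖ ^ 2) ^ (-((n : ℝ) + 1))) =
      ∫ y, (F0 y - F1 y - F2 y) * g y := by rw [hsum]; ring
  rw [this]
  exact e3


theorem stmt_16 (n k : ℕ) (s β C₀ C₁ C₂ : ℝ) (hn0 : 0 < n) (hs0 : 0 < s) (hs1 : s < 1)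
    (hn : 2 * s + 2 < (n : ℝ)) (hk1 : 1 ≤ k) (hk2 : (k : ℝ) < ((n : ℝ) - 2 * s) / 2)
    (hβ1 : (n : ℝ) - 2 * s < β) (hβ2 : β < (n : ℝ))
    (hC₀ : 0 < C₀) (hC₁ : 0 < C₁) (hC₁₂ : C₁ < C₂)
    (a : Fin n → ℝ) (K : EuclideanSpace ℝ (Fin n) → ℝ) (hK : KHyp n k β a K)
    (ε : ℝ) (hε : 0 < ε) :
    ∃ C > (0 : ℝ), ∃ l₀ : ℕ, ∀ l : ℕ, l₀ ≤ l → ∀ m : ℕ, 1 ≤ m →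
      ∀ lam : ℝ, lam = (l : ℝ) ^ (((n : ℝ) - 2 * s) / (β - (n : ℝ) + 2 * s)) →
      ∀ X : Fin ((m + 1) ^ k) → EuclideanSpace ℝ (Fin n), latticeEnum n k m (lam * l) X →
      ∀ P : Fin ((m + 1) ^ k) → EuclideanSpace ℝ (Fin n), (∀ i, ‖P i - X i‖ < 1 / 2) →
      ∀ Λ : Fin ((m + 1) ^ k) → ℝ, (∀ i, Λ i ∈ Set.Icc C₁ C₂) →
      ∀ i : Fin ((m + 1) ^ k), ∀ j : Fin n,
        |(∫ x : EuclideanSpace ℝ (Fin n),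
              K (lam⁻¹ • x) *
                (C₀ * (Λ i / (1 + Λ i ^ 2 * ‖x - P i‖ ^ 2)) ^ (((n : ℝ) - 2 * s) / 2)) ^
                  (((n : ℝ) + 2 * s) / ((n : ℝ) - 2 * s)) *
                deriv (fun b : ℝ =>
                  C₀ * (Λ i / (1 + Λ i ^ 2 *
                    ‖x - (P i + b • EuclideanSpace.single j (1 : ℝ))‖ ^ 2)) ^
                      (((n : ℝ) - 2 * s) / 2)) 0) -
            ((n : ℝ) - 2 * s) * C₀ ^ (2 * (n : ℝ) / ((n : ℝ) - 2 * s)) * β * a j *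
              Λ i ^ (-(β - 2)) * lam ^ (-β) *
              (∫ x : EuclideanSpace ℝ (Fin n),
                |x ⟨0, hn0⟩| ^ β * (1 + ‖x‖ ^ 2) ^ (-((n : ℝ) + 1))) *
              (P i j - X i j)| ≤
          C * ‖P i - X i‖ ^ 2 * lam ^ (-β) + ε * lam ^ (-β) := by
  have hns : 0 < (n : ℝ) - 2 * s := by linarith
  have hβ : 2 < β := by linarith
  obtain ⟨A, hA, hcore⟩ := aux_core n k β C₁ hC₁ hβ hβ2 a K hK
  set G : ℝ := ((n : ℝ) - 2 * s) * C₀ ^ (2 * (n : ℝ) / ((n : ℝ) - 2 * s)) * C₂ ^ ((n : ℝ) + 2) with hG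
  have hC₂ : 0 < C₂ := hC₁.trans hC₁₂
  have hG0 : 0 < G := by positivity
  obtain ⟨M, hM, hcore⟩ := hcore (ε / (2 * (G * A))) (by positivity)
  set S := ∑ i, |a i| with hS
  have hS0 : 0 ≤ S := by positivity
  have hb0 : 0 < β * (β - 1) := mul_pos (by linarith) (by linarith)
  refine ⟨G * A * (S * (β * (β - 1))) + 1, by positivity, ?_⟩
  set σ := ((n : ℝ) - 2 * s) / (β - (n : ℝ) + 2 * s) with hσ
  have hσ0 : 0 < σ := div_pos hns (by linarith)
  have hlim : Filter.Tendsto (fun l : ℕ => G * A * (M * ((l : ℝ) ^ σ) ^ (-(1 / 2 : ℝ)))) Filter.atTop (nhds 0) := by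
    have h1 : Filter.Tendsto (fun l : ℕ => (l : ℝ) ^ σ) Filter.atTop Filter.atTop :=
      (tendsto_rpow_atTop hσ0).comp tendsto_natCast_atTop_atTop
    have h2 := (tendsto_rpow_neg_atTop (by norm_num : (0:ℝ) < 1 / 2)).comp h1
    have h3 := (h2.const_mul M).const_mul (G * A)
    simpa using h3
  have hev := (hlim.eventually (gt_mem_nhds (by positivity : (0:ℝ) < ε / 2))).and
    (Filter.eventually_ge_atTop 1)
  obtain ⟨l₀, hl₀⟩ := Filter.eventually_atTop.1 hev
  refine ⟨l₀, ?_⟩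
  intro l hl m _ lam hlam X hX P hP Λ hΛ i j
  obtain ⟨hsmall, hl1⟩ := hl₀ l hl
  have hl0 : (0:ℝ) < l := by exact_mod_cast hl1
  have hlam0 : 0 < lam := by rw [hlam]; positivity
  rw [← hlam] at hsmall
  have hL0 : 0 < Λ i := hC₁.trans_le (hΛ i).1
  set p := P i - X i with hp
  have hpj : P i j - X i j = p j := by simp [hp]
  have hcore' := hcore lam hlam0 (Λ i) (hΛ i).1 p (hP i) j
  have hbase := aux_scale n β (Λ i) hL0 hn0 j
  set T := ∫ x : EuclideanSpace ℝ (Fin n), |x ⟨0, hn0⟩| ^ β * (1 + ‖x‖ ^ 2) ^ (-((n : ℝ) + 1)) with hT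
  set I1 := ∫ y : EuclideanSpace ℝ (Fin n), |y j| ^ β * (1 + Λ i ^ 2 * ‖y‖ ^ 2) ^ (-((n : ℝ) + 1)) with hI1
  set J := ∫ y : EuclideanSpace ℝ (Fin n), K (lam⁻¹ • (y + p)) *
            (y j * (1 + Λ i ^ 2 * ‖y‖ ^ 2) ^ (-((n : ℝ) + 1))) with hJ
  set c : ℝ := ((n : ℝ) - 2 * s) * C₀ ^ (2 * (n : ℝ) / ((n : ℝ) - 2 * s)) with hc
  have hc0 : 0 < c := by positivity
  obtain ⟨q, -, hq2, hq3⟩ := hX.2.1 i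
  have hper : ∀ y : EuclideanSpace ℝ (Fin n), K (lam⁻¹ • (y + P i)) = K (lam⁻¹ • (y + p)) := by
    intro y
    have e : lam⁻¹ • (y + P i) = lam⁻¹ • (y + p) + lam⁻¹ • X i := by
      rw [← smul_add, hp]; congr 1; abel
    rw [e]
    refine aux_per n k K hK.2.2.2.1 (fun j => (l : ℤ) * q j) (fun j hj => by simp [hq2 j hj]) _ _ ?_
    intro j'
    rw [PiLp.smul_apply, hq3 j', smul_eq_mul]
    push_cast
    field_simp
  have hInt : (∫ x : EuclideanSpace ℝ (Fin n),
              K (lam⁻¹ • x) *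
                (C₀ * (Λ i / (1 + Λ i ^ 2 * ‖x - P i‖ ^ 2)) ^ (((n : ℝ) - 2 * s) / 2)) ^
                  (((n : ℝ) + 2 * s) / ((n : ℝ) - 2 * s)) *
                deriv (fun b : ℝ =>
                  C₀ * (Λ i / (1 + Λ i ^ 2 *
                    ‖x - (P i + b • EuclideanSpace.single j (1 : ℝ))‖ ^ 2)) ^
                      (((n : ℝ) - 2 * s) / 2)) 0) = c * Λ i ^ ((n : ℝ) + 2) * J := by
    rw [← integral_add_right_eq_self _ (P i), hJ, ← integral_const_mul]
    congr 1
    ext y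
    rw [mul_assoc, aux_integrand n s C₀ (Λ i) hns hC₀ hL0, add_sub_cancel_right, hper y]
    ring
  rw [hInt, hpj]
  have hmain : c * Λ i ^ ((n : ℝ) + 2) * J - c * β * a j * Λ i ^ (-(β - 2)) * lam ^ (-β) * T * p j
      = c * Λ i ^ ((n : ℝ) + 2) * (J - lam ^ (-β) * (a j * β * p j * I1)) := by
    linear_combination (c * lam ^ (-β) * (a j * β * p j)) * hbase
  rw [hmain, abs_mul, abs_of_pos (by positivity)]
  have hcG : c * Λ i ^ ((n : ℝ) + 2) ≤ G := by
    rw [hG]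
    exact mul_le_mul_of_nonneg_left (Real.rpow_le_rpow hL0.le (hΛ i).2 (by positivity)) hc0.le
  have haS : |a j| ≤ S := Finset.single_le_sum (f := fun i => |a i|) (fun i _ => abs_nonneg _) (Finset.mem_univ j)
  have hlb : 0 < lam ^ (-β) := by positivity
  calc _ ≤ G * (lam ^ (-β) * (S * (β * (β - 1) * ‖p‖ ^ 2) + ε / (2 * (G * A)) + M * lam ^ (-(1 / 2 : ℝ))) * A) := by
        refine mul_le_mul hcG (hcore'.trans ?_) (abs_nonneg _) hG0.le
        gcongr
    _ = G * A * (S * (β * (β - 1))) * ‖p‖ ^ 2 * lam ^ (-β) + ε / 2 * lam ^ (-β)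
          + (G * A * (M * lam ^ (-(1 / 2 : ℝ)))) * lam ^ (-β) := by
        field_simp
    _ ≤ _ := by
        have h1 := mul_le_mul_of_nonneg_right hsmall.le hlb.le
        have h2 : 0 ≤ ‖p‖ ^ 2 * lam ^ (-β) := by positivity
        nlinarith
end

section
/- There exist a constant C > 0 and an integer l_0, both independent of m, such that for all integers l ≥ l_0, all indices h ≠ i, and all admissible P^i, P^h, Λ_i, Λ_h: | ∫_{ℝ^n} ( K(x/λ) − 1 ) U_{P^h,Λ_h}(x)^{(n+2s)/(n−2s)} (∂U_{P^i,Λ_i}/∂Λ_i)(x) dx | ≤ C λ^{−2s} |X^i − X^h|^{−(n−2s)}. -/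
open MeasureTheory in
theorem aux_g_integrable (n : ℕ) (hn : 0 < n) (a b : ℝ) (ha : a < n) (hb : (n : ℝ) < b) :
    Integrable (fun x : EuclideanSpace ℝ (Fin n) =>
      (fun r : ℝ => if r ≤ 1 then r ^ (-a) else r ^ (-b)) ‖x‖) := by
  have : Nonempty (Fin n) := ⟨⟨0, hn⟩⟩
  have : Nontrivial (EuclideanSpace ℝ (Fin n)) := by
    apply Module.nontrivial_of_finrank_pos (R := ℝ)
    simpa using hn
  apply (integrable_fun_norm_addHaar volume (f := fun r : ℝ => if r ≤ 1 then r ^ (-a) else r ^ (-b))).mpr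
  have hd : ((n - 1 : ℕ) : ℝ) = (n : ℝ) - 1 := by
    rw [Nat.cast_sub (by omega)]; simp
  have hU : Set.Ioi (0 : ℝ) = Set.Ioc 0 1 ∪ Set.Ioi 1 := by
    rw [Set.Ioc_union_Ioi_eq_Ioi]; norm_num
  rw [hU]
  apply IntegrableOn.union
  · have h1 : IntegrableOn (fun y : ℝ => y ^ ((n : ℝ) - 1 - a)) (Set.Ioc 0 1) := by
      have := intervalIntegral.intervalIntegrable_rpow' (a := 0) (b := 1)
        (r := (n : ℝ) - 1 - a) (by linarith)
      rwa [intervalIntegrable_iff_integrableOn_Ioc_of_le (by norm_num)] at this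
    refine h1.congr_fun ?_ measurableSet_Ioc
    intro y hy
    have hy0 : 0 < y := hy.1
    simp only [hy.2, if_true, finrank_euclideanSpace, Fintype.card_fin, smul_eq_mul]
    rw [← Real.rpow_natCast, ← Real.rpow_add hy0, hd]
    congr 1
  · have h1 : IntegrableOn (fun y : ℝ => y ^ ((n : ℝ) - 1 - b)) (Set.Ioi 1) :=
      integrableOn_Ioi_rpow_of_lt (by linarith) (by norm_num)
    refine h1.congr_fun ?_ measurableSet_Ioi
    intro y hy
    have hy1 : 1 < y := hy
    have hy0 : 0 < y := by linarith
    simp only [not_le.mpr hy1, if_false, finrank_euclideanSpace, Fintype.card_fin, smul_eq_mul]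
    rw [← Real.rpow_natCast, ← Real.rpow_add hy0, hd]
    congr 1

open MeasureTheory in
theorem aux_scale_integrable (n : ℕ) (f : EuclideanSpace ℝ (Fin n) → ℝ) (hf : Integrable f)
    (r : ℝ) (hr : 0 < r) (Y : EuclideanSpace ℝ (Fin n)) :
    Integrable (fun x => f (r⁻¹ • (x - Y))) :=
  (hf.comp_smul (inv_ne_zero hr.ne')).comp_sub_right Y

open MeasureTheory in
theorem aux_scale_integral (n : ℕ) (f : EuclideanSpace ℝ (Fin n) → ℝ)
    (r : ℝ) (hr : 0 < r) (Y : EuclideanSpace ℝ (Fin n)) :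
    ∫ x, f (r⁻¹ • (x - Y)) = r ^ (n : ℝ) * ∫ x, f x := by
  rw [integral_sub_right_eq_self (fun x => f (r⁻¹ • x)) Y,
    Measure.integral_comp_inv_smul_of_nonneg _ _ hr.le]
  simp

theorem aux_K_bound (n k : ℕ) (β : ℝ) (hβ : 0 < β) (a : Fin n → ℝ)
    (K : EuclideanSpace ℝ (Fin n) → ℝ) (hK : KHyp n k β a K) :
    ∃ A > (0 : ℝ), ∀ y, |K y - 1| ≤ A ∧ |K y - 1| ≤ A * ‖y‖ ^ β := by
  obtain ⟨⟨K0, K1, hK0, hKb⟩, -, -, -, hK00, -, -, -, R, hR, -, -, hlim⟩ := hK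
  have h1 : ∀ᶠ y in nhds (0 : EuclideanSpace ℝ (Fin n)), y ∈ ({0}ᶜ : Set _) →
      ∑ j ∈ Finset.range (⌊β⌋₊ + 1), ‖iteratedFDeriv ℝ j R y‖ * ‖y‖ ^ (-β + (j : ℝ)) < 1 := by
    have := hlim.eventually (gt_mem_nhds one_pos)
    exact eventually_nhdsWithin_iff.mp this
  obtain ⟨δ, hδ, hball⟩ := Metric.eventually_nhds_iff.mp (hR.and h1)
  set S := ∑ i, |a i| with hS
  have hS0 : 0 ≤ S := Finset.sum_nonneg fun i _ => abs_nonneg _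
  have hK1 : 0 < K1 := lt_of_lt_of_le hK0 ((hKb 0).1.trans (hKb 0).2)
  have hδβ : 0 < δ ^ (-β) := Real.rpow_pos_of_pos hδ _
  have hb : ∀ y, |K y - 1| ≤ K1 + 1 := by
    intro y
    have := hKb y
    rw [abs_le]; constructor <;> linarith
  refine ⟨(K1 + 1) + (K1 + 1) * δ ^ (-β) + (S + 1), by positivity, fun y => ⟨?_, ?_⟩⟩
  · have := hb y
    have : 0 ≤ (K1 + 1) * δ ^ (-β) := by positivity
    linarith [hb y]
  · by_cases hy0 : y = 0
    · subst hy0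
      simp [hK00, Real.zero_rpow hβ.ne']
    have hyn : 0 < ‖y‖ := norm_pos_iff.mpr hy0
    have hyβ : 0 < ‖y‖ ^ β := Real.rpow_pos_of_pos hyn _
    by_cases hyδ : ‖y‖ < δ
    · obtain ⟨hKy, hRy⟩ := hball (y := y) (by simpa [dist_eq_norm] using hyδ)
      have hRy := hRy (by simpa using hy0)
      have h0 : ‖iteratedFDeriv ℝ 0 R y‖ * ‖y‖ ^ (-β + ((0 : ℕ) : ℝ)) ≤
          ∑ j ∈ Finset.range (⌊β⌋₊ + 1), ‖iteratedFDeriv ℝ j R y‖ * ‖y‖ ^ (-β + (j : ℝ)) :=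
        Finset.single_le_sum
          (f := fun j : ℕ => ‖iteratedFDeriv ℝ j R y‖ * ‖y‖ ^ (-β + (j : ℝ)))
          (fun j _ => by positivity) (by simp)
      have h2 : |R y| * ‖y‖ ^ (-β) < 1 := by
        have := lt_of_le_of_lt h0 hRy
        simpa [norm_iteratedFDeriv_zero] using this
      have h3 : |R y| ≤ ‖y‖ ^ β := by
        rw [Real.rpow_neg hyn.le, ← div_eq_mul_inv, div_lt_one hyβ] at h2
        exact h2.le
      have h4 : |∑ i, a i * |y i| ^ β| ≤ S * ‖y‖ ^ β := by
        refine (Finset.abs_sum_le_sum_abs _ _).trans ?_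
        rw [hS, Finset.sum_mul]
        apply Finset.sum_le_sum
        intro i _
        rw [abs_mul, abs_of_nonneg (Real.rpow_nonneg (abs_nonneg (y i)) β)]
        gcongr
        simpa using PiLp.norm_apply_le y i
      have h5 : |K y - 1| ≤ S * ‖y‖ ^ β + ‖y‖ ^ β := by
        rw [hKy]
        have : 1 + ∑ i, a i * |y i| ^ β + R y - 1 = (∑ i, a i * |y i| ^ β) + R y := by ring
        rw [this]
        exact (abs_add_le _ _).trans (add_le_add h4 h3)
      have : 0 ≤ ((K1 + 1) + (K1 + 1) * δ ^ (-β)) * ‖y‖ ^ β := by positivity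
      nlinarith
    · push Not at hyδ
      have h1 : 1 ≤ δ ^ (-β) * ‖y‖ ^ β := by
        rw [Real.rpow_neg hδ.le, ← div_eq_inv_mul, one_le_div (Real.rpow_pos_of_pos hδ _)]
        exact Real.rpow_le_rpow hδ.le hyδ hβ.le
      have h2 : 0 ≤ ((K1 + 1) + (S + 1)) * ‖y‖ ^ β := by positivity
      have h3 := hb y
      have h4 : (K1 + 1) * 1 ≤ (K1 + 1) * (δ ^ (-β) * ‖y‖ ^ β) := by gcongr
      nlinarith

theorem aux_K_periodic (n k : ℕ) (K : EuclideanSpace ℝ (Fin n) → ℝ)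
    (hper : ∀ x : EuclideanSpace ℝ (Fin n), ∀ j : Fin n, (j : ℕ) < k →
      K (x + EuclideanSpace.single j (1 : ℝ)) = K x)
    (q : Fin n → ℤ) (hq : ∀ j : Fin n, k ≤ (j : ℕ) → q j = 0)
    (Y : EuclideanSpace ℝ (Fin n)) (hY : ∀ j, Y j = (q j : ℝ)) (x : EuclideanSpace ℝ (Fin n)) :
    K (x - Y) = K x := by
  have key : ∀ S : Finset (Fin n),
      Function.Periodic K (∑ j ∈ S, q j • EuclideanSpace.single j (1 : ℝ)) := by
    intro S
    induction S using Finset.induction_on with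
    | empty => intro x; simp
    | insert j S hj ih =>
      rw [Finset.sum_insert hj]
      refine Function.Periodic.add_period ?_ ih
      by_cases hjk : (j : ℕ) < k
      · exact Function.Periodic.zsmul (fun x => hper x j hjk) _
      · rw [hq j (by omega)]; intro x; simp
  have hYs : Y = ∑ j, q j • EuclideanSpace.single j (1 : ℝ) := by
    ext i
    simp [hY, Finset.sum_apply, Pi.single_apply]
  rw [hYs]
  exact (key Finset.univ).sub_eq x

theorem aux_t_bound (C₁ C₂ L r ρ : ℝ) (hC₁ : 0 < C₁) (hL : L ∈ Set.Icc C₁ C₂)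
    (hr : 0 ≤ r) (hρ : 0 < ρ) (hρr : ρ ≤ r + 1 / 2) :
    L / (1 + L ^ 2 * r ^ 2) ≤ (2 / C₁ + C₂) * ρ ^ (-2 : ℝ) := by
  have hL0 : 0 < L := hC₁.trans_le hL.1
  have hC2 : 0 < C₂ := hL0.trans_le hL.2
  have e : ρ ^ (-2 : ℝ) = (ρ ^ 2)⁻¹ := by
    rw [Real.rpow_neg hρ.le]; norm_num
  rw [e, ← div_eq_mul_inv, div_le_div_iff₀ (by positivity) (by positivity)]
  have h1 : ρ ^ 2 ≤ 2 * r ^ 2 + 1 / 2 := by nlinarith [sq_nonneg (r - 1 / 2)]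
  have h2 : L * ρ ^ 2 ≤ L * (2 * r ^ 2 + 1 / 2) := by gcongr
  have h3 : 2 * L * r ^ 2 ≤ 2 / C₁ * (L ^ 2 * r ^ 2) := by
    have : 2 / C₁ * (L ^ 2 * r ^ 2) = (L / C₁) * (2 * L * r ^ 2) := by ring
    rw [this]
    have : 1 ≤ L / C₁ := (one_le_div hC₁).mpr hL.1
    have : 0 ≤ 2 * L * r ^ 2 := by positivity
    nlinarith
  have h4 : 0 ≤ 2 / C₁ := by positivity
  have h5 : 0 ≤ C₂ * (L ^ 2 * r ^ 2) := by positivity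
  nlinarith [hL.2]

theorem aux_U_bound (C₀ C₁ C₂ L r ρ α p : ℝ) (hC₀ : 0 < C₀) (hC₁ : 0 < C₁)
    (hL : L ∈ Set.Icc C₁ C₂)
    (hr : 0 ≤ r) (hρ : 0 < ρ) (hρr : ρ ≤ r + 1 / 2) (hα : 0 < α) (hp : 0 < p) :
    (C₀ * (L / (1 + L ^ 2 * r ^ 2)) ^ α) ^ p ≤
      (C₀ * (2 / C₁ + C₂) ^ α) ^ p * ρ ^ (-(2 * α * p)) := by
  have hL0 : 0 < L := hC₁.trans_le hL.1
  have hC2 : 0 < C₂ := hL0.trans_le hL.2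
  have h := aux_t_bound C₁ C₂ L r ρ hC₁ hL hr hρ hρr
  calc (C₀ * (L / (1 + L ^ 2 * r ^ 2)) ^ α) ^ p
      ≤ (C₀ * ((2 / C₁ + C₂) * ρ ^ (-2 : ℝ)) ^ α) ^ p := by gcongr
    _ = _ := by
      rw [Real.mul_rpow (x := 2 / C₁ + C₂) (by positivity) (by positivity), ← mul_assoc,
        Real.mul_rpow (y := (ρ ^ (-2 : ℝ)) ^ α) (by positivity) (by positivity), ← Real.rpow_mul hρ.le,
        ← Real.rpow_mul hρ.le]
      congr 2; ring

theorem aux_dU_bound (C₀ C₁ C₂ L r ρ α : ℝ) (hC₀ : 0 < C₀) (hC₁ : 0 < C₁)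
    (hL : L ∈ Set.Icc C₁ C₂)
    (hr : 0 ≤ r) (hρ : 0 < ρ) (hρr : ρ ≤ r + 1 / 2) (hα : 0 < α) :
    |deriv (fun b : ℝ => C₀ * (b / (1 + b ^ 2 * r ^ 2)) ^ α) L| ≤
      (C₀ * α / C₁ * (2 / C₁ + C₂) ^ α) * ρ ^ (-(2 * α)) := by
  have hL0 : 0 < L := hC₁.trans_le hL.1
  have hC2 : 0 < C₂ := hL0.trans_le hL.2
  have h := aux_t_bound C₁ C₂ L r ρ hC₁ hL hr hρ hρr
  have hden : 0 < 1 + L ^ 2 * r ^ 2 := by positivity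
  set t := L / (1 + L ^ 2 * r ^ 2) with ht
  have ht0 : 0 < t := by positivity
  have hd1 : HasDerivAt (fun b : ℝ => b / (1 + b ^ 2 * r ^ 2))
      ((1 * (1 + L ^ 2 * r ^ 2) - L * (((2 : ℕ) : ℝ) * L ^ (2 - 1) * 1 * r ^ 2)) /
        (1 + L ^ 2 * r ^ 2) ^ 2) L := by
    have h2 : HasDerivAt (fun b : ℝ => 1 + b ^ 2 * r ^ 2)
        (((2 : ℕ) : ℝ) * L ^ (2 - 1) * 1 * r ^ 2) L :=
      ((((hasDerivAt_id L).pow 2).mul_const (r ^ 2)).const_add 1)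
    exact (hasDerivAt_id L).div h2 hden.ne'
  have hd2 := (hd1.rpow_const (p := α) (Or.inl ht0.ne')).const_mul C₀
  rw [hd2.deriv]
  have e1 : t ^ (α - 1) = t ^ α / t := Real.rpow_sub_one ht0.ne' α
  change |C₀ * (_ * α * t ^ (α - 1))| ≤ _
  rw [e1]
  have e2 : C₀ * ((1 * (1 + L ^ 2 * r ^ 2) - L * (((2 : ℕ) : ℝ) * L ^ (2 - 1) * 1 * r ^ 2)) /
        (1 + L ^ 2 * r ^ 2) ^ 2 * α * (t ^ α / t)) =
      (C₀ * α / L * t ^ α) * ((1 - L ^ 2 * r ^ 2) / (1 + L ^ 2 * r ^ 2)) := by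
    have : t ^ α / t = t ^ α * ((1 + L ^ 2 * r ^ 2) / L) := by
      rw [div_eq_mul_inv]; congr 1; rw [ht, inv_div]
    rw [this]
    field_simp
    push_cast
    ring
  rw [e2, abs_mul, abs_of_pos (by positivity)]
  have h3 : |(1 - L ^ 2 * r ^ 2) / (1 + L ^ 2 * r ^ 2)| ≤ 1 := by
    rw [abs_div, abs_of_pos hden, div_le_one hden, abs_le]
    have : 0 ≤ L ^ 2 * r ^ 2 := by positivity
    constructor <;> linarith
  calc C₀ * α / L * t ^ α * |(1 - L ^ 2 * r ^ 2) / (1 + L ^ 2 * r ^ 2)|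
      ≤ C₀ * α / L * t ^ α * 1 := by gcongr
    _ ≤ C₀ * α / C₁ * ((2 / C₁ + C₂) * ρ ^ (-2 : ℝ)) ^ α := by
      rw [mul_one]
      gcongr
      exact hL.1
    _ = _ := by
      rw [Real.mul_rpow (by positivity) (by positivity), ← Real.rpow_mul hρ.le, ← mul_assoc]
      congr 2; ring

/-- The pointwise estimate in terms of the distances to the two centres. -/
theorem aux_pointwise (N s β lam D ρ σ : ℝ) (hs : 0 < s) (hNs : 2 * s < N) (hlam : 0 < lam)
    (hD : 0 < D)
    (hρ : 0 < ρ) (hσ : 0 < σ) (h1 : D ≤ ρ + σ) (h2 : σ ≤ ρ + D) (A kk : ℝ) (hA : 0 < A)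
    (hk0 : 0 ≤ kk) (hk : kk ≤ A) (hkβ : kk ≤ A * (lam⁻¹ * ρ) ^ β) :
    kk * ρ ^ (-(N + 2 * s)) * σ ^ (-(N - 2 * s)) ≤
      A * 3 ^ (N + 2 * s) *
      (D ^ (-(N - 2 * s)) * lam ^ (-(N + 2 * s)) *
        (if lam⁻¹ * ρ ≤ 1 then (lam⁻¹ * ρ) ^ (-(N + 2 * s - β))
          else (lam⁻¹ * ρ) ^ (-(N + 2 * s))) +
       D ^ (-(2 * N)) * (if D⁻¹ * σ ≤ 1 then (D⁻¹ * σ) ^ (-(N - 2 * s))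
          else (D⁻¹ * σ) ^ (-(2 * N)))) := by
  have h3e : (3 : ℝ) ^ (N - 2 * s) ≤ 3 ^ (N + 2 * s) := by
    apply Real.rpow_le_rpow_of_exponent_le <;> linarith
  have hz : 0 < lam⁻¹ * ρ := by positivity
  have hw : 0 < D⁻¹ * σ := by positivity
  set z := lam⁻¹ * ρ with hzdef
  set w := D⁻¹ * σ with hwdef
  have hρz : ρ = lam * z := by rw [hzdef]; field_simp
  have hσw : σ = D * w := by rw [hwdef]; field_simp
  by_cases hc : ρ ≤ D / 2
  · have hσD : D / 3 ≤ σ := by linarith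
    have hb : σ ^ (-(N - 2 * s)) ≤ 3 ^ (N + 2 * s) * D ^ (-(N - 2 * s)) := by
      calc σ ^ (-(N - 2 * s)) ≤ (D / 3) ^ (-(N - 2 * s)) :=
            Real.rpow_le_rpow_of_nonpos (by positivity) hσD (by linarith)
        _ = 3 ^ (N - 2 * s) * D ^ (-(N - 2 * s)) := by
            rw [Real.div_rpow hD.le (by norm_num), Real.rpow_neg (by norm_num : (0:ℝ) ≤ 3)]
            field_simp
        _ ≤ _ := by gcongr
    have ha : kk * ρ ^ (-(N + 2 * s)) ≤ A * (lam ^ (-(N + 2 * s)) *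
        (if z ≤ 1 then z ^ (-(N + 2 * s - β)) else z ^ (-(N + 2 * s)))) := by
      have e : ρ ^ (-(N + 2 * s)) = lam ^ (-(N + 2 * s)) * z ^ (-(N + 2 * s)) := by
        rw [hρz, Real.mul_rpow hlam.le hz.le]
      rw [e]
      split_ifs
      · calc kk * (lam ^ (-(N + 2 * s)) * z ^ (-(N + 2 * s)))
            ≤ (A * z ^ β) * (lam ^ (-(N + 2 * s)) * z ^ (-(N + 2 * s))) := by gcongr
          _ = A * (lam ^ (-(N + 2 * s)) * (z ^ β * z ^ (-(N + 2 * s)))) := by ring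
          _ = _ := by rw [← Real.rpow_add hz]; congr 3; ring
      · gcongr
    have h0 : 0 ≤ A * 3 ^ (N + 2 * s) * (D ^ (-(2 * N)) * (if w ≤ 1 then w ^ (-(N - 2 * s))
          else w ^ (-(2 * N)))) := by split_ifs <;> positivity
    calc kk * ρ ^ (-(N + 2 * s)) * σ ^ (-(N - 2 * s))
        ≤ (A * (lam ^ (-(N + 2 * s)) *
          (if z ≤ 1 then z ^ (-(N + 2 * s - β)) else z ^ (-(N + 2 * s))))) *
          (3 ^ (N + 2 * s) * D ^ (-(N - 2 * s))) := by
            apply mul_le_mul ha hb (by positivity)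
            split_ifs <;> positivity
      _ ≤ _ := by rw [mul_add]; linarith
  · push Not at hc
    have h0 : 0 ≤ A * 3 ^ (N + 2 * s) * (D ^ (-(N - 2 * s)) * lam ^ (-(N + 2 * s)) *
        (if z ≤ 1 then z ^ (-(N + 2 * s - β)) else z ^ (-(N + 2 * s)))) := by
      split_ifs <;> positivity
    have gen : ∀ q, 0 < q → q / 3 ≤ ρ →
        ρ ^ (-(N + 2 * s)) ≤ 3 ^ (N + 2 * s) * q ^ (-(N + 2 * s)) := by
      intro q hq hqρ
      calc ρ ^ (-(N + 2 * s)) ≤ (q / 3) ^ (-(N + 2 * s)) :=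
            Real.rpow_le_rpow_of_nonpos (by positivity) hqρ (by linarith)
        _ = _ := by
            rw [Real.div_rpow hq.le (by norm_num), Real.rpow_neg (by norm_num : (0:ℝ) ≤ 3)]
            field_simp
    have hm : ρ ^ (-(N + 2 * s)) * σ ^ (-(N - 2 * s)) ≤ 3 ^ (N + 2 * s) *
        (D ^ (-(2 * N)) * (if w ≤ 1 then w ^ (-(N - 2 * s)) else w ^ (-(2 * N)))) := by
      split_ifs
      · calc _ ≤ (3 ^ (N + 2 * s) * D ^ (-(N + 2 * s))) * σ ^ (-(N - 2 * s)) := by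
              gcongr; exact gen D hD (by linarith)
          _ = _ := by
              rw [hσw, Real.mul_rpow hD.le hw.le]
              have : D ^ (-(2 * N)) = D ^ (-(N + 2 * s)) * D ^ (-(N - 2 * s)) := by
                rw [← Real.rpow_add hD]; congr 1; ring
              rw [this]; ring
      · calc _ ≤ (3 ^ (N + 2 * s) * σ ^ (-(N + 2 * s))) * σ ^ (-(N - 2 * s)) := by
              gcongr; exact gen σ hσ (by linarith)
          _ = 3 ^ (N + 2 * s) * σ ^ (-(2 * N)) := by
              rw [mul_assoc, ← Real.rpow_add hσ]; congr 2; ring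
          _ = _ := by rw [hσw, Real.mul_rpow hD.le hw.le]
    calc kk * ρ ^ (-(N + 2 * s)) * σ ^ (-(N - 2 * s))
        = kk * (ρ ^ (-(N + 2 * s)) * σ ^ (-(N - 2 * s))) := by ring
      _ ≤ A * (3 ^ (N + 2 * s) *
        (D ^ (-(2 * N)) * (if w ≤ 1 then w ^ (-(N - 2 * s)) else w ^ (-(2 * N))))) :=
          mul_le_mul hk hm (by positivity) hA.le
      _ ≤ _ := by rw [mul_add]; linarith

set_option maxHeartbeats 1000000 in
theorem stmt_17 (n k : ℕ) (s β C₀ C₁ C₂ : ℝ) (hn0 : 0 < n) (hs0 : 0 < s) (hs1 : s < 1)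
    (hn : 2 * s + 2 < (n : ℝ)) (hn4s : 4 * s < (n : ℝ)) (hβ4s : (n : ℝ) + 2 * s - β < 4 * s)
    (hk1 : 1 ≤ k) (hk2 : (k : ℝ) < ((n : ℝ) - 2 * s) / 2)
    (hβ1 : (n : ℝ) - 2 * s < β) (hβ2 : β < (n : ℝ))
    (hC₀ : 0 < C₀) (hC₁ : 0 < C₁) (hC₁₂ : C₁ < C₂)
    (a : Fin n → ℝ) (K : EuclideanSpace ℝ (Fin n) → ℝ) (hK : KHyp n k β a K) :
    ∃ C > (0 : ℝ), ∃ l₀ : ℕ, ∀ l : ℕ, l₀ ≤ l → ∀ m : ℕ, 1 ≤ m →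
      ∀ lam : ℝ, lam = (l : ℝ) ^ (((n : ℝ) - 2 * s) / (β - (n : ℝ) + 2 * s)) →
      ∀ X : Fin ((m + 1) ^ k) → EuclideanSpace ℝ (Fin n), latticeEnum n k m (lam * l) X →
      ∀ P : Fin ((m + 1) ^ k) → EuclideanSpace ℝ (Fin n), (∀ i, ‖P i - X i‖ < 1 / 2) →
      ∀ Λ : Fin ((m + 1) ^ k) → ℝ, (∀ i, Λ i ∈ Set.Icc C₁ C₂) →
      ∀ i h : Fin ((m + 1) ^ k), h ≠ i →
        |∫ x : EuclideanSpace ℝ (Fin n),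
            (K (lam⁻¹ • x) - 1) *
              (C₀ * (Λ h / (1 + Λ h ^ 2 * ‖x - P h‖ ^ 2)) ^ (((n : ℝ) - 2 * s) / 2)) ^
                (((n : ℝ) + 2 * s) / ((n : ℝ) - 2 * s)) *
              deriv (fun b : ℝ =>
                C₀ * (b / (1 + b ^ 2 * ‖x - P i‖ ^ 2)) ^ (((n : ℝ) - 2 * s) / 2)) (Λ i)| ≤
          C * lam ^ (-(2 * s)) * ‖X i - X h‖ ^ (-((n : ℝ) - 2 * s)) := by
  have hKc := hK
  obtain ⟨-, -, -, hper, -⟩ := hKc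
  have hβ0 : 0 < β := by linarith
  obtain ⟨A, hA, hKb⟩ := aux_K_bound n k β hβ0 a K hK
  have hα : 0 < ((n : ℝ) - 2 * s) / 2 := by linarith
  have hp : 0 < ((n : ℝ) + 2 * s) / ((n : ℝ) - 2 * s) := by
    apply div_pos <;> linarith
  have hC₂ : 0 < C₂ := hC₁.trans hC₁₂
  have hI1 := aux_g_integrable n hn0 ((n : ℝ) + 2 * s - β) ((n : ℝ) + 2 * s)
    (by linarith) (by linarith)
  have hI2 := aux_g_integrable n hn0 ((n : ℝ) - 2 * s) (2 * (n : ℝ))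
    (by linarith) (by linarith)
  set f1 : EuclideanSpace ℝ (Fin n) → ℝ := fun x =>
      (fun r : ℝ => if r ≤ 1 then r ^ (-((n : ℝ) + 2 * s - β)) else r ^ (-((n : ℝ) + 2 * s))) ‖x‖
    with hf1
  set f2 : EuclideanSpace ℝ (Fin n) → ℝ := fun x =>
      (fun r : ℝ => if r ≤ 1 then r ^ (-((n : ℝ) - 2 * s)) else r ^ (-(2 * (n : ℝ)))) ‖x‖
    with hf2
  have hJ1 : 0 ≤ ∫ x, f1 x := by
    apply MeasureTheory.integral_nonneg
    intro x; simp only [hf1, Pi.zero_apply]; split_ifs <;> positivity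
  have hJ2 : 0 ≤ ∫ x, f2 x := by
    apply MeasureTheory.integral_nonneg
    intro x; simp only [hf2, Pi.zero_apply]; split_ifs <;> positivity
  set M1 : ℝ := (C₀ * (2 / C₁ + C₂) ^ (((n : ℝ) - 2 * s) / 2)) ^
    (((n : ℝ) + 2 * s) / ((n : ℝ) - 2 * s)) with hM1
  set M2 : ℝ := C₀ * (((n : ℝ) - 2 * s) / 2) / C₁ * (2 / C₁ + C₂) ^ (((n : ℝ) - 2 * s) / 2) with hM2
  have hM1p : 0 < M1 := by positivity
  have hM2p : 0 < M2 := by positivity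
  set B : ℝ := M1 * M2 * (A * 3 ^ ((n : ℝ) + 2 * s)) with hB
  have hBp : 0 < B := by positivity
  refine ⟨B * ((∫ x, f1 x) + (∫ x, f2 x) + 1), by positivity, 1, ?_⟩
  intro l hl m hm lam hlam X hX P hP Λ hΛ i h hih
  have hl1 : (1 : ℝ) ≤ l := by exact_mod_cast hl
  have hlam1 : 1 ≤ lam := by
    rw [hlam]
    apply Real.one_le_rpow hl1
    apply div_nonneg <;> linarith
  have hlam0 : 0 < lam := by linarith
  obtain ⟨hinj, hXq, -⟩ := hX
  -- distance bound
  have hD : lam ≤ ‖X i - X h‖ := by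
    obtain ⟨q, -, -, hq⟩ := hXq i
    obtain ⟨q', -, -, hq'⟩ := hXq h
    have hne : X i ≠ X h := fun e => hih (hinj e).symm
    have : ∃ j, X i j ≠ X h j := by
      by_contra! hcon
      exact hne (by ext j; exact hcon j)
    obtain ⟨j, hj⟩ := this
    have hqq : q j ≠ q' j := by
      intro e; apply hj; rw [hq, hq', e]
    have hint : (1 : ℝ) ≤ |(q j : ℝ) - q' j| := by
      have : 1 ≤ |q j - q' j| := Int.one_le_abs (sub_ne_zero.mpr hqq)
      exact_mod_cast this
    have h1 : |(X i - X h) j| ≤ ‖X i - X h‖ := by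
      simpa using PiLp.norm_apply_le (X i - X h) j
    refine le_trans ?_ h1
    have : (X i - X h) j = lam * l * ((q j : ℝ) - q' j) := by
      rw [PiLp.sub_apply, hq, hq']; ring
    rw [this, abs_mul, abs_of_pos (by positivity)]
    have : lam * 1 * 1 ≤ lam * l * |(q j : ℝ) - q' j| := by gcongr
    linarith
  set D := ‖X i - X h‖ with hDdef
  have hD0 : 0 < D := by linarith
  -- periodicity
  have hKper : ∀ x, K (lam⁻¹ • x) = K (lam⁻¹ • (x - X h)) := by
    intro x
    obtain ⟨q, -, hq0, hq⟩ := hXq h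
    rw [smul_sub]
    symm
    apply aux_K_periodic n k K hper (fun j => (l : ℤ) * q j)
    · intro j hj; simp [hq0 j hj]
    · intro j
      rw [PiLp.smul_apply, hq, smul_eq_mul]
      push_cast
      field_simp
  set c1 : ℝ := B * (D ^ (-((n : ℝ) - 2 * s)) * lam ^ (-((n : ℝ) + 2 * s))) with hc1
  set c2 : ℝ := B * D ^ (-(2 * (n : ℝ))) with hc2
  have hGi1 := (aux_scale_integrable n f1 hI1 lam hlam0 (X h)).const_mul c1
  have hGi2 := (aux_scale_integrable n f2 hI2 D hD0 (X i)).const_mul c2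
  rw [← Real.norm_eq_abs]
  have : Nonempty (Fin n) := ⟨⟨0, hn0⟩⟩
  have : Nontrivial (EuclideanSpace ℝ (Fin n)) := by
    apply Module.nontrivial_of_finrank_pos (R := ℝ)
    simpa using hn0
  refine (MeasureTheory.norm_integral_le_of_norm_le (hGi1.add hGi2) ?_).trans ?_
  · have hne1 : ∀ᵐ x : EuclideanSpace ℝ (Fin n), x ≠ X h := by
      simp [MeasureTheory.ae_iff]
    have hne2 : ∀ᵐ x : EuclideanSpace ℝ (Fin n), x ≠ X i := by
      simp [MeasureTheory.ae_iff]
    filter_upwards [hne1, hne2] with x hx1 hx2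
    have hρ : 0 < ‖x - X h‖ := norm_pos_iff.mpr (sub_ne_zero.mpr hx1)
    have hσ : 0 < ‖x - X i‖ := norm_pos_iff.mpr (sub_ne_zero.mpr hx2)
    have tri : ∀ j, ‖x - X j‖ ≤ ‖x - P j‖ + 1 / 2 := by
      intro j
      have : x - X j = (x - P j) + (P j - X j) := by abel
      rw [this]
      exact (norm_add_le _ _).trans (by linarith [hP j])
    have ht1 : D ≤ ‖x - X h‖ + ‖x - X i‖ := by
      have : X i - X h = (x - X h) - (x - X i) := by abel
      rw [hDdef, this]; exact norm_sub_le _ _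
    have ht2 : ‖x - X i‖ ≤ ‖x - X h‖ + D := by
      have : x - X i = (x - X h) - (X i - X h) := by abel
      rw [hDdef, this]; exact norm_sub_le _ _
    have hU := aux_U_bound C₀ C₁ C₂ (Λ h) ‖x - P h‖ ‖x - X h‖ _ _ hC₀ hC₁ (hΛ h)
      (norm_nonneg _) hρ (tri h) hα hp
    have hdU := aux_dU_bound C₀ C₁ C₂ (Λ i) ‖x - P i‖ ‖x - X i‖ _ hC₀ hC₁ (hΛ i)
      (norm_nonneg _) hσ (tri i) hα
    have e1 : 2 * (((n : ℝ) - 2 * s) / 2) * (((n : ℝ) + 2 * s) / ((n : ℝ) - 2 * s)) =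
        (n : ℝ) + 2 * s := by
      have : (n : ℝ) - 2 * s ≠ 0 := by linarith
      field_simp
    have e2 : 2 * (((n : ℝ) - 2 * s) / 2) = (n : ℝ) - 2 * s := by ring
    rw [e1, ← hM1] at hU
    rw [e2, ← hM2] at hdU
    have hns : ∀ (r : ℝ) (y : EuclideanSpace ℝ (Fin n)), 0 < r → ‖r⁻¹ • y‖ = r⁻¹ * ‖y‖ := by
      intro r y hr
      rw [norm_smul, Real.norm_eq_abs, abs_of_pos (inv_pos.mpr hr)]
    have hkk := hKb (lam⁻¹ • (x - X h))
    rw [hns _ _ hlam0, ← hKper] at hkk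
    have hpt := aux_pointwise (n : ℝ) s β lam D ‖x - X h‖ ‖x - X i‖ hs0 (by linarith) hlam0 hD0
      hρ hσ ht1 ht2 A |K (lam⁻¹ • x) - 1| hA (abs_nonneg _) hkk.1 hkk.2
    have hΛh : 0 < Λ h := hC₁.trans_le (hΛ h).1
    rw [Real.norm_eq_abs, abs_mul, abs_mul]
    rw [abs_of_nonneg (a := (C₀ * (Λ h / (1 + Λ h ^ 2 * ‖x - P h‖ ^ 2)) ^ (((n : ℝ) - 2 * s) / 2)) ^
                (((n : ℝ) + 2 * s) / ((n : ℝ) - 2 * s))) (by positivity)]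
    calc _ ≤ |K (lam⁻¹ • x) - 1| * (M1 * ‖x - X h‖ ^ (-((n : ℝ) + 2 * s))) *
          (M2 * ‖x - X i‖ ^ (-((n : ℝ) - 2 * s))) := by
            gcongr
      _ = M1 * M2 * (|K (lam⁻¹ • x) - 1| * ‖x - X h‖ ^ (-((n : ℝ) + 2 * s)) *
          ‖x - X i‖ ^ (-((n : ℝ) - 2 * s))) := by ring
      _ ≤ M1 * M2 * _ := mul_le_mul_of_nonneg_left hpt (by positivity)
      _ = _ := by
        simp only [Pi.add_apply, hf1, hf2, hns _ _ hlam0, hns _ _ hD0, hc1, hc2, hB]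
        ring
  · have hsum : ∫ x, ((fun x => c1 * f1 (lam⁻¹ • (x - X h))) +
        (fun x => c2 * f2 (D⁻¹ • (x - X i)))) x =
        c1 * (lam ^ (n : ℝ) * ∫ x, f1 x) + c2 * (D ^ (n : ℝ) * ∫ x, f2 x) := by
      rw [MeasureTheory.integral_add' hGi1 hGi2, MeasureTheory.integral_const_mul,
        MeasureTheory.integral_const_mul, aux_scale_integral n f1 lam hlam0,
        aux_scale_integral n f2 D hD0]
    refine hsum.le.trans ?_
    have g1 : lam ^ (-((n : ℝ) + 2 * s)) * lam ^ (n : ℝ) = lam ^ (-(2 * s)) := by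
      rw [← Real.rpow_add hlam0]; congr 1; ring
    have g2 : D ^ (-(2 * (n : ℝ))) * D ^ (n : ℝ) ≤ lam ^ (-(2 * s)) * D ^ (-((n : ℝ) - 2 * s)) := by
      have : D ^ (-(2 * (n : ℝ))) * D ^ (n : ℝ) = D ^ (-(2 * s)) * D ^ (-((n : ℝ) - 2 * s)) := by
        rw [← Real.rpow_add hD0, ← Real.rpow_add hD0]; congr 1; ring
      rw [this]
      gcongr ?_ * _
      exact Real.rpow_le_rpow_of_nonpos hlam0 hD (by linarith)
    have r1 : c1 * (lam ^ (n : ℝ) * ∫ x, f1 x) =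
        B * (∫ x, f1 x) * (lam ^ (-(2 * s)) * D ^ (-((n : ℝ) - 2 * s))) := by
      rw [hc1, ← g1]; ring
    have r2 : c2 * (D ^ (n : ℝ) * ∫ x, f2 x) ≤
        B * (∫ x, f2 x) * (lam ^ (-(2 * s)) * D ^ (-((n : ℝ) - 2 * s))) := by
      have : c2 * (D ^ (n : ℝ) * ∫ x, f2 x) =
        B * (∫ x, f2 x) * (D ^ (-(2 * (n : ℝ))) * D ^ (n : ℝ)) := by rw [hc2]; ring
      rw [this]
      exact mul_le_mul_of_nonneg_left g2 (mul_nonneg hBp.le hJ2)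
    have r3 : 0 ≤ B * (lam ^ (-(2 * s)) * D ^ (-((n : ℝ) - 2 * s))) := by positivity
    rw [r1]
    have : B * ((∫ x, f1 x) + (∫ x, f2 x) + 1) * lam ^ (-(2 * s)) * D ^ (-((n : ℝ) - 2 * s)) = B * (∫ x, f1 x) * (lam ^ (-(2 * s)) * D ^ (-((n : ℝ) - 2 * s))) +
      B * (∫ x, f2 x) * (lam ^ (-(2 * s)) * D ^ (-((n : ℝ) - 2 * s))) + B * (lam ^ (-(2 * s)) * D ^ (-((n : ℝ) - 2 * s))) := by ring
    rw [this]
    linarith only [r2, r3]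
end

section
/- Let c_0 = C_0^{2n/(n−2s)} ∫_{ℝ^n} (1+|y|²)^{−(n+2s)/2} dy and, for points P^i, P^h ∈ ℝ^n and Λ_i, Λ_h ∈ [C_1, C_2], let ε_{ih} = ( Λ_i/Λ_h + Λ_h/Λ_i + Λ_i Λ_h |P^i − P^h|² )^{−(n−2s)/2}. There exist constants C > 0 and δ_0 > 0, depending only on n, s, C_1, C_2, such that whenever ε_{ih} ≤ δ_0: | ∫_{ℝ^n} U_{P^h,Λ_h}(x)^{(n+2s)/(n−2s)} (∂U_{P^i,Λ_i}/∂Λ_i)(x) dx − c_0 ∂ε_{ih}/∂Λ_i | ≤ C Λ_i^{−1} ε_{ih}^{n/(n−2s)} |log ε_{ih}|. -/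
/-- the radial profile -/
noncomputable def psi (m u : ℝ) : ℝ := 2 * u ^ (-(m + 1)) - u ^ (-m)

lemma bern (p t : ℝ) (hp : 0 ≤ p) (ht : -1 < t) : 1 - p * t ≤ (1 + t) ^ (-p) := by
  rw [Real.rpow_def_of_pos (by linarith)]
  have h1 := Real.add_one_le_exp (Real.log (1 + t) * -p)
  have h2 := Real.log_le_sub_one_of_pos (show 0 < 1 + t by linarith)
  nlinarith

lemma bern_upper (p t : ℝ) (hp : 0 ≤ p) (ht : -1 < t) :
    (1 + t) ^ (-p) ≤ 1 - p * t * (1 + t) ^ (-(p + 1)) := by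
  have h0 : 0 < 1 + t := by linarith
  have h := bern p ((1 + t)⁻¹ - 1) hp (by have := inv_pos.2 h0; linarith)
  have e1 : 1 + ((1 + t)⁻¹ - 1) = (1 + t)⁻¹ := by ring
  rw [e1, Real.inv_rpow h0.le] at h
  have hpos : 0 < (1 + t) ^ (-p) := Real.rpow_pos_of_pos h0 _
  have e2 : (1 + t) ^ (-(p + 1)) = (1 + t) ^ (-p) * (1 + t)⁻¹ := by
    rw [neg_add, Real.rpow_add h0, Real.rpow_neg_one]
  rw [e2]
  have h3 := mul_le_mul_of_nonneg_left h hpos.le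
  rw [mul_inv_cancel₀ hpos.ne'] at h3
  have e3 : (1 + t)⁻¹ - 1 = - t * (1 + t)⁻¹ := by field_simp; ring
  rw [e3] at h3
  nlinarith

lemma taylor1 (p : ℝ) (hp : 0 ≤ p) : ∃ K : ℝ, 0 ≤ K ∧ ∀ t : ℝ, |t| ≤ 9 / 16 →
    |(1 + t) ^ (-p) - 1| ≤ K * |t| := by
  refine ⟨p * ((7 / 16 : ℝ) ^ (-(p + 1)) + 1), by positivity, fun t ht => ?_⟩
  have ht' := abs_le.1 ht
  have h1 := bern p t hp (by linarith)
  have h2 := bern_upper p t hp (by linarith)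
  have h3 : (1 + t) ^ (-(p + 1)) ≤ (7 / 16 : ℝ) ^ (-(p + 1)) :=
    Real.rpow_le_rpow_of_nonpos (by norm_num) (by linarith) (by linarith)
  have h4 : 0 ≤ (1 + t) ^ (-(p + 1)) := Real.rpow_nonneg (by linarith) _
  set A := (7 / 16 : ℝ) ^ (-(p + 1))
  set B := (1 + t) ^ (-(p + 1))
  have h5 : -t * B ≤ |t| * A :=
    (mul_le_mul_of_nonneg_right (neg_le_abs t) h4).trans
      (mul_le_mul_of_nonneg_left h3 (abs_nonneg t))
  have h6 := mul_le_mul_of_nonneg_left h5 hp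
  have h7 := mul_le_mul_of_nonneg_left (le_abs_self t) hp
  have h8 : 0 ≤ p * (|t| * A) := by positivity
  have h9 : 0 ≤ p * |t| := by positivity
  rw [abs_le]; constructor <;> nlinarith

lemma taylor2 (p : ℝ) (hp : 0 ≤ p) : ∃ K : ℝ, 0 ≤ K ∧ ∀ t : ℝ, |t| ≤ 9 / 16 →
    |(1 + t) ^ (-p) - 1 + p * t| ≤ K * t ^ 2 := by
  obtain ⟨K, hK, h⟩ := taylor1 (p + 1) (by linarith)
  refine ⟨p * K, by positivity, fun t ht => ?_⟩
  have ht' := abs_le.1 ht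
  have h1 := bern p t hp (by linarith)
  have h2 := bern_upper p t hp (by linarith)
  have h3 := h t ht
  set B := (1 + t) ^ (-(p + 1))
  rw [abs_of_nonneg (by linarith)]
  have h4 : -t * (B - 1) ≤ |t| * (K * |t|) := by
    calc -t * (B - 1) ≤ |-t * (B - 1)| := le_abs_self _
      _ = |t| * |B - 1| := by rw [abs_mul, abs_neg]
      _ ≤ _ := by gcongr
  have h5 : |t| * (K * |t|) = K * t ^ 2 := by rw [← sq_abs t]; ring
  rw [h5] at h4
  nlinarith [mul_le_mul_of_nonneg_left h4 hp]

lemma second_diff (p : ℝ) (hp : 0 ≤ p) : ∃ K : ℝ, 0 ≤ K ∧ ∀ u t₁ t₂ r : ℝ, 0 < u → |t₁| ≤ 9 / 16 →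
    |t₂| ≤ 9 / 16 → |t₁ + t₂| ≤ 2 * r ^ 2 → |t₁| ≤ 9 / 4 * r → |t₂| ≤ 9 / 4 * r →
    |(u * (1 + t₁)) ^ (-p) + (u * (1 + t₂)) ^ (-p) - 2 * u ^ (-p)| ≤ K * u ^ (-p) * r ^ 2 := by
  obtain ⟨K, hK, h⟩ := taylor2 p hp
  refine ⟨2 * p + 2 * K * (9 / 4) ^ 2, by positivity, fun u t₁ t₂ r hu h1 h2 h12 hr1 hr2 => ?_⟩
  have g1 := abs_le.1 h1
  have g2 := abs_le.1 h2
  rw [Real.mul_rpow hu.le (by linarith), Real.mul_rpow hu.le (by linarith)]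
  have hup : 0 < u ^ (-p) := Real.rpow_pos_of_pos hu _
  set A := (1 + t₁) ^ (-p) with hA
  set B := (1 + t₂) ^ (-p) with hB
  have e : u ^ (-p) * A + u ^ (-p) * B - 2 * u ^ (-p)
      = u ^ (-p) * ((A - 1 + p * t₁) + (B - 1 + p * t₂) - p * (t₁ + t₂)) := by ring
  rw [e, abs_mul, abs_of_pos hup]
  have k1 : t₁ ^ 2 ≤ (9 / 4 * r) ^ 2 := by rw [← sq_abs t₁]; gcongr
  have k2 : t₂ ^ 2 ≤ (9 / 4 * r) ^ 2 := by rw [← sq_abs t₂]; gcongr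
  have b1 := (h t₁ h1).trans (mul_le_mul_of_nonneg_left k1 hK)
  have b2 := (h t₂ h2).trans (mul_le_mul_of_nonneg_left k2 hK)
  have b3 : |p * (t₁ + t₂)| ≤ p * (2 * r ^ 2) := by
    rw [abs_mul, abs_of_nonneg hp]; gcongr
  have : |(A - 1 + p * t₁) + (B - 1 + p * t₂) - p * (t₁ + t₂)| ≤
      (2 * p + 2 * K * (9 / 4) ^ 2) * r ^ 2 := by
    rw [← hA] at b1
    rw [← hB] at b2
    rw [abs_le] at *
    constructor <;> nlinarith
  calc _ ≤ u ^ (-p) * ((2 * p + 2 * K * (9 / 4) ^ 2) * r ^ 2) := by gcongr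
    _ = _ := by ring

lemma psi_abs (m u : ℝ) (hu : 1 ≤ u) : |psi m u| ≤ u ^ (-m) := by
  have hu0 : 0 < u := by linarith
  have e : u ^ (-(m + 1)) = u ^ (-m) * u⁻¹ := by
    rw [neg_add, Real.rpow_add hu0, Real.rpow_neg_one]
  have h1 : u⁻¹ ≤ 1 := inv_le_one_of_one_le₀ hu
  have h2 : 0 < u⁻¹ := inv_pos.2 hu0
  have hp : 0 < u ^ (-m) := Real.rpow_pos_of_pos hu0 _
  rw [psi, e, abs_le]
  constructor <;> nlinarith [mul_pos hp h2]

lemma psi_second_diff (m : ℝ) (hm : 0 ≤ m) : ∃ K : ℝ, 0 ≤ K ∧ ∀ u t₁ t₂ r : ℝ, 1 ≤ u →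
    |t₁| ≤ 9 / 16 →
    |t₂| ≤ 9 / 16 → |t₁ + t₂| ≤ 2 * r ^ 2 → |t₁| ≤ 9 / 4 * r → |t₂| ≤ 9 / 4 * r →
    |psi m (u * (1 + t₁)) + psi m (u * (1 + t₂)) - 2 * psi m u| ≤ K * u ^ (-m) * r ^ 2 := by
  obtain ⟨K, hK, h⟩ := second_diff m hm
  obtain ⟨L, hL, h'⟩ := second_diff (m + 1) (by linarith)
  refine ⟨2 * L + K, by positivity, fun u t₁ t₂ r hu h1 h2 h12 hr1 hr2 => ?_⟩
  have a1 := h u t₁ t₂ r (by linarith) h1 h2 h12 hr1 hr2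
  have a2 := h' u t₁ t₂ r (by linarith) h1 h2 h12 hr1 hr2
  have a3 : u ^ (-(m + 1)) ≤ u ^ (-m) := Real.rpow_le_rpow_of_exponent_le hu (by linarith)
  have a4 : L * u ^ (-(m + 1)) * r ^ 2 ≤ L * u ^ (-m) * r ^ 2 := by gcongr
  unfold psi
  rw [abs_le] at *
  constructor <;> nlinarith

lemma psi_close (m u l : ℝ) (hm : 0 ≤ m) (hu : 1 ≤ u) (hl : 0 ≤ l) :
    |psi m (u + l) - psi m u| ≤ (2 + m * l) * u ^ (-(m + 1)) := by
  have hu0 : 0 < u := by linarith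
  have e : u ^ (-(m + 1)) = u ^ (-m) * u⁻¹ := by
    rw [neg_add, Real.rpow_add hu0, Real.rpow_neg_one]
  have h1 : (u + l) ^ (-(m + 1)) ≤ u ^ (-(m + 1)) :=
    Real.rpow_le_rpow_of_nonpos hu0 (by linarith) (by linarith)
  have h2 : (u + l) ^ (-m) ≤ u ^ (-m) :=
    Real.rpow_le_rpow_of_nonpos hu0 (by linarith) (by linarith)
  have h3 : 0 ≤ (u + l) ^ (-(m + 1)) := Real.rpow_nonneg (by linarith) _
  have h4 := bern m (l / u) hm (by have : 0 ≤ l / u := by positivity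
                                   linarith)
  have h5 : (u + l) ^ (-m) = u ^ (-m) * (1 + l / u) ^ (-m) := by
    rw [← Real.mul_rpow hu0.le (by positivity)]; congr 1; field_simp
  have hp : 0 < u ^ (-m) := Real.rpow_pos_of_pos hu0 _
  have h6 := mul_le_mul_of_nonneg_left h4 hp.le
  rw [← h5] at h6
  have h7 : u ^ (-m) * (1 - m * (l / u)) = u ^ (-m) - m * l * u ^ (-(m + 1)) := by
    rw [e]; ring
  rw [h7] at h6
  have h8 : 0 ≤ m * l * u ^ (-(m + 1)) := by positivity
  unfold psi
  rw [abs_le]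
  constructor <;> nlinarith

lemma rpow_bound (m L C R : ℝ) (hm : 0 ≤ m) (hC : 0 < C) (hL : C ≤ L) (hR : 0 < R) :
    (1 + L ^ 2 * R ^ 2) ^ (-m) ≤ C ^ (-(2 * m)) * R ^ (-(2 * m)) := by
  have hL0 : 0 < L := by linarith
  rw [← Real.mul_rpow hC.le hR.le]
  have e : (C * R) ^ (-(2 * m)) = ((C * R) ^ 2) ^ (-m) := by
    rw [← Real.rpow_natCast, ← Real.rpow_mul (by positivity)]; congr 1; push_cast; ring
  rw [e]
  apply Real.rpow_le_rpow_of_nonpos (by positivity) _ (by linarith)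
  have : (C * R) ^ 2 ≤ (L * R) ^ 2 := by gcongr
  nlinarith

lemma w_bound (q L C R : ℝ) (hq : 0 ≤ q) (hC : 0 < C) (hL : C ≤ L) (hR : 0 < R) :
    (L / (1 + L ^ 2 * R ^ 2)) ^ q ≤ C ^ (-q) * R ^ (-(2 * q)) := by
  have hL0 : 0 < L := by linarith
  have e : C ^ (-q) * R ^ (-(2 * q)) = (C⁻¹ * (R ^ 2)⁻¹) ^ q := by
    rw [Real.mul_rpow (by positivity) (by positivity), Real.inv_rpow hC.le,
      Real.inv_rpow (by positivity), Real.rpow_neg hC.le, Real.rpow_neg hR.le,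
      Real.rpow_mul hR.le, Real.rpow_two]
  rw [e]
  apply Real.rpow_le_rpow (by positivity) _ hq
  rw [← mul_inv, div_le_iff₀ (by positivity), inv_mul_eq_div, le_div_iff₀ (by positivity)]
  nlinarith [mul_le_mul_of_nonneg_right hL (show 0 ≤ L * R ^ 2 by positivity)]

lemma deriv_U (m C L r : ℝ) (hL : 0 < L) :
    deriv (fun Λ : ℝ => C * (Λ / (1 + Λ ^ 2 * r ^ 2)) ^ m) L
      = C * (m * L ^ (m - 1) * psi m (1 + L ^ 2 * r ^ 2)) := by
  have hu : 0 < 1 + L ^ 2 * r ^ 2 := by positivity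
  have h1 : HasDerivAt (fun Λ : ℝ => 1 + Λ ^ 2 * r ^ 2) (2 * L * r ^ 2) L := by
    have := ((hasDerivAt_pow 2 L).mul_const (r ^ 2)).const_add 1
    simpa using this
  have h2 := (hasDerivAt_id L).div h1 hu.ne'
  have h3 := (h2.rpow_const (p := m) (Or.inl (by simp only [id, Pi.div_apply]; positivity))).const_mul C
  refine h3.deriv.trans ?_
  simp only [id, Pi.div_apply]
  congr 1
  unfold psi
  set u := 1 + L ^ 2 * r ^ 2 with hudef
  have e1 : u ^ (-(m + 1)) = u ^ (-m) * u⁻¹ := by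
    rw [neg_add, Real.rpow_add hu, Real.rpow_neg_one]
  have e2 : (L / u) ^ (m - 1) = L ^ (m - 1) * (u ^ (-m) * u) := by
    rw [Real.div_rpow hL.le hu.le, div_eq_mul_inv, ← Real.rpow_neg hu.le]
    congr 1
    rw [show -(m - 1) = -m + 1 by ring, Real.rpow_add hu, Real.rpow_one]
  rw [e1, e2]
  field_simp
  rw [hudef]
  ring

lemma deriv_eps (m L M d : ℝ) (hL : 0 < L) (hM : 0 < M) :
    deriv (fun Λ : ℝ => (Λ / M + M / Λ + Λ * M * d ^ 2) ^ (-m)) L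
      = m * L ^ (m - 1) * M ^ (-m) * psi m ((1 + L ^ 2 * d ^ 2) + (L / M) ^ 2) := by
  set v := (1 + L ^ 2 * d ^ 2) + (L / M) ^ 2 with hvdef
  have hv : 0 < v := by positivity
  have hQ : L / M + M / L + L * M * d ^ 2 = (M / L) * v := by
    rw [hvdef]; field_simp; ring
  have h1 : HasDerivAt (fun Λ : ℝ => Λ / M + M / Λ + Λ * M * d ^ 2)
      (1 / M + (-M / L ^ 2) + M * d ^ 2) L := by
    have a := (hasDerivAt_id L).div_const M
    have b := (hasDerivAt_inv hL.ne').const_mul M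
    have c := ((hasDerivAt_id L).mul_const M).mul_const (d ^ 2)
    have e : 1 / M + (-M / L ^ 2) + M * d ^ 2 = 1 / M + M * -(L ^ 2)⁻¹ + 1 * M * d ^ 2 := by
      field_simp
    rw [e]
    exact (a.add b).add c
  have h3 := h1.rpow_const (p := -m) (Or.inl (by rw [hQ]; positivity))
  refine h3.deriv.trans ?_
  rw [hQ]
  unfold psi
  have e1 : v ^ (-(m + 1)) = v ^ (-m) * v⁻¹ := by
    rw [neg_add, Real.rpow_add hv, Real.rpow_neg_one]
  have e2 : (M / L * v) ^ (-m - 1) = M ^ (-m) * L ^ (m - 1) * L ^ 2 * M⁻¹ * (v ^ (-m) * v⁻¹) := by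
    rw [Real.mul_rpow (by positivity) hv.le, Real.div_rpow hM.le hL.le, div_eq_mul_inv,
      ← Real.rpow_neg hL.le, Real.rpow_sub hM, Real.rpow_sub hv, Real.rpow_one, Real.rpow_one,
      show -(-m - 1) = (m - 1) + 2 by ring, Real.rpow_add hL, Real.rpow_two]
    ring
  rw [e1, e2]
  have e3 : L ^ 2 * (1 / M + (-M / L ^ 2) + M * d ^ 2) = M * (v - 2) := by
    rw [hvdef]; field_simp; ring
  have e4 : M ^ (-m) * L ^ (m - 1) * L ^ 2 * M⁻¹ * (v ^ (-m) * v⁻¹) *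
     (1 / M + (-M / L ^ 2) + M * d ^ 2) = M ^ (-m) * L ^ (m - 1) * M⁻¹ * (v ^ (-m) * v⁻¹) * (M * (v - 2)) := by
    rw [← e3]; ring
  calc _ = -m * (M ^ (-m) * L ^ (m - 1) * L ^ 2 * M⁻¹ * (v ^ (-m) * v⁻¹) *
     (1 / M + (-M / L ^ 2) + M * d ^ 2)) := by ring
    _ = _ := by rw [e4]; field_simp; ring

open MeasureTheory Metric in
lemma int_ball (n : ℕ) (hn : 0 < n) (p r : ℝ) (hr : 0 < r) (hp : -(n : ℝ) < p) :
    Integrable ((ball (0 : EuclideanSpace ℝ (Fin n)) r).indicator fun z => ‖z‖ ^ p) := by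
  have : Nontrivial (EuclideanSpace ℝ (Fin n)) := by
    apply Module.nontrivial_of_finrank_pos (R := ℝ); simpa using hn
  rw [integrable_indicator_iff measurableSet_ball]
  rw [integrableOn_fun_norm_addHaar volume (f := fun t : ℝ => t ^ p)]
  have h := (intervalIntegral.integrableOn_Ioo_rpow_iff (s := (n : ℝ) - 1 + p) hr).2 (by linarith)
  refine (integrableOn_congr_fun ?_ measurableSet_Ioo).1 h
  intro x hx
  simp only [finrank_euclideanSpace, Fintype.card_fin, smul_eq_mul]
  rw [Real.rpow_add hx.1, ← Real.rpow_natCast, Nat.cast_sub hn, Nat.cast_one]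

open MeasureTheory Metric in
lemma int_far (n : ℕ) (q : ℝ) (hq : (n : ℝ) < 2 * q) :
    Integrable ((ball (0 : EuclideanSpace ℝ (Fin n)) (1 / 4))ᶜ.indicator
      fun z => ‖z‖ ^ (-(2 * q))) := by
  have hq0 : 0 ≤ q := by have : (0 : ℝ) ≤ n := n.cast_nonneg
                         linarith
  have h := (integrable_rpow_neg_one_add_norm_sq (E := EuclideanSpace ℝ (Fin n)) (μ := volume)
    (r := 2 * q) (by simpa using hq)).const_mul ((17 : ℝ) ^ q)
  refine h.mono' ?_ (Filter.Eventually.of_forall fun z => ?_)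
  · apply Measurable.aestronglyMeasurable
    exact Measurable.indicator (by fun_prop) measurableSet_ball.compl
  · by_cases hz : z ∈ (ball (0 : EuclideanSpace ℝ (Fin n)) (1 / 4))ᶜ
    · rw [Set.indicator_of_mem hz]
      simp only [Set.mem_compl_iff, mem_ball, dist_zero_right, not_lt] at hz
      have hz0 : 0 < ‖z‖ := by linarith
      rw [Real.norm_of_nonneg (by positivity)]
      have e : ‖z‖ ^ (-(2 * q)) = (17 : ℝ) ^ q * (17 * ‖z‖ ^ 2) ^ (-q) := by
        rw [Real.mul_rpow (by norm_num) (by positivity), ← mul_assoc, ← Real.rpow_add (by norm_num),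
          add_neg_cancel, Real.rpow_zero, one_mul, ← Real.rpow_natCast, ← Real.rpow_mul hz0.le]
        congr 1; push_cast; ring
      rw [e, show -(2 * q) / 2 = -q by ring]
      apply mul_le_mul_of_nonneg_left _ (by positivity)
      apply Real.rpow_le_rpow_of_nonpos (by positivity) _ (by linarith)
      nlinarith
    · rw [Set.indicator_of_notMem hz, norm_zero]; positivity

/-- the dominating function -/
noncomputable def HH (n : ℕ) (m q : ℝ) (e z : EuclideanSpace ℝ (Fin n)) : ℝ :=
  (Metric.ball (0 : EuclideanSpace ℝ (Fin n)) (1 / 4)).indicator (fun z => ‖z‖ ^ (2 - 2 * q)) z +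
  4 * (Metric.ball (0 : EuclideanSpace ℝ (Fin n)) (1 / 4))ᶜ.indicator (fun z => ‖z‖ ^ (-(2 * q))) z +
  4 ^ (2 * q) *
   ((Metric.ball (0 : EuclideanSpace ℝ (Fin n)) 1).indicator (fun z => ‖z‖ ^ (-(2 * m))) (e + z) +
    (Metric.ball (0 : EuclideanSpace ℝ (Fin n)) 1).indicator (fun z => ‖z‖ ^ (-(2 * m))) (e - z))

open MeasureTheory in
lemma HH_int (n : ℕ) (hn : 0 < n) (m q : ℝ) (hm : 2 * m < n) (hq : (n : ℝ) < 2 * q)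
    (hq' : 2 * q < n + 2) : ∃ A : ℝ, 0 ≤ A ∧ ∀ e : EuclideanSpace ℝ (Fin n),
    Integrable (HH n m q e) ∧ ∫ z, HH n m q e z = A := by
  have h1 := int_ball n hn (2 - 2 * q) (1 / 4) (by norm_num) (by linarith)
  have h2 := int_far n q hq
  have h3 := int_ball n hn (-(2 * m)) 1 (by norm_num) (by linarith)
  refine ⟨(∫ z, (Metric.ball (0 : EuclideanSpace ℝ (Fin n)) (1 / 4)).indicator
      (fun z => ‖z‖ ^ (2 - 2 * q)) z) +
    4 * (∫ z, (Metric.ball (0 : EuclideanSpace ℝ (Fin n)) (1 / 4))ᶜ.indicator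
      (fun z => ‖z‖ ^ (-(2 * q))) z) +
    4 ^ (2 * q) * ((∫ z, (Metric.ball (0 : EuclideanSpace ℝ (Fin n)) 1).indicator
      (fun z => ‖z‖ ^ (-(2 * m))) z) + ∫ z, (Metric.ball (0 : EuclideanSpace ℝ (Fin n)) 1).indicator
      (fun z => ‖z‖ ^ (-(2 * m))) z), ?_, fun e => ?_⟩
  · have aux : ∀ (S : Set (EuclideanSpace ℝ (Fin n))) (p : ℝ),
        0 ≤ ∫ z, S.indicator (fun z => ‖z‖ ^ p) z := fun S p =>
      integral_nonneg fun z => Set.indicator_nonneg (fun z _ => by positivity) z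
    have := aux (Metric.ball 0 (1 / 4)) (2 - 2 * q)
    have := aux (Metric.ball 0 (1 / 4))ᶜ (-(2 * q))
    have := aux (Metric.ball 0 1) (-(2 * m))
    positivity
  · have h4 := h3.comp_add_left e
    have h5 := h3.comp_sub_left e
    have i1 := h4.add h5
    have i2 := i1.const_mul ((4 : ℝ) ^ (2 * q))
    have i3 := h2.const_mul (4 : ℝ)
    constructor
    · exact (h1.add i3).add i2
    · unfold HH
      have k1 := integral_add' (h1.add i3) i2
      have k2 := integral_add' h1 i3
      have k3 := integral_add' h4 h5
      simp only [Pi.add_apply] at k1 k2 k3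
      rw [k1, k2, integral_const_mul, integral_const_mul,
        k3, integral_add_left_eq_self, integral_sub_left_eq_self
          (fun v => (Metric.ball (0 : EuclideanSpace ℝ (Fin n)) 1).indicator
            (fun z => ‖z‖ ^ (-(2 * m))) v)]

lemma HH_prod (n : ℕ) (m q r : ℝ) (hm : 0 ≤ m) (hq : 0 ≤ q) (hr : 1 / 4 ≤ r)
    (v : EuclideanSpace ℝ (Fin n)) :
    r ^ (-(2 * q)) * ‖v‖ ^ (-(2 * m)) ≤ 4 ^ (2 * q) *
      (Metric.ball (0 : EuclideanSpace ℝ (Fin n)) 1).indicator (fun z => ‖z‖ ^ (-(2 * m))) v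
      + r ^ (-(2 * q)) := by
  have hr0 : 0 < r := by linarith
  by_cases hv : v ∈ Metric.ball (0 : EuclideanSpace ℝ (Fin n)) 1
  · rw [Set.indicator_of_mem hv]
    have h1 : r ^ (-(2 * q)) ≤ 4 ^ (2 * q) := by
      calc r ^ (-(2 * q)) ≤ (1 / 4 : ℝ) ^ (-(2 * q)) :=
            Real.rpow_le_rpow_of_nonpos (by norm_num) hr (by linarith)
        _ = _ := by rw [one_div, Real.inv_rpow (by norm_num), Real.rpow_neg (by norm_num), inv_inv]
    have h2 : 0 ≤ r ^ (-(2 * q)) := by positivity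
    have h3 : 0 ≤ ‖v‖ ^ (-(2 * m)) := by positivity
    nlinarith [mul_le_mul_of_nonneg_right h1 h3]
  · rw [Set.indicator_of_notMem hv]
    simp only [Metric.mem_ball, dist_zero_right, not_lt] at hv
    have h1 : ‖v‖ ^ (-(2 * m)) ≤ 1 := Real.rpow_le_one_of_one_le_of_nonpos hv (by linarith)
    have h2 : 0 ≤ r ^ (-(2 * q)) := by positivity
    nlinarith

set_option maxHeartbeats 2000000 in
lemma pointwise (n : ℕ) (m q C : ℝ) (hm : 0 ≤ m) (hq : 0 ≤ q) (hC : 0 < C) :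
    ∃ K : ℝ, 0 ≤ K ∧ ∀ (a y : EuclideanSpace ℝ (Fin n)) (L M : ℝ), C ≤ L → C ≤ M → a ≠ 0 → y ≠ 0 →
      a + y ≠ 0 → a - y ≠ 0 →
      (M / (1 + M ^ 2 * ‖y‖ ^ 2)) ^ q * |psi m (1 + L ^ 2 * ‖a + y‖ ^ 2)
        + psi m (1 + L ^ 2 * ‖a - y‖ ^ 2) - 2 * psi m (1 + L ^ 2 * ‖a‖ ^ 2)|
      ≤ K * ‖a‖ ^ (-(2 * (m + q))) * HH n m q (‖a‖⁻¹ • a) (‖a‖⁻¹ • y) := by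
  obtain ⟨K, hK, hS⟩ := psi_second_diff m hm
  refine ⟨C ^ (-q) * C ^ (-(2 * m)) * (K + 1), by positivity,
    fun a y L M hL hM ha hy hay hay' => ?_⟩
  have hL0 : 0 < L := by linarith
  have hM0 : 0 < M := by linarith
  set d := ‖a‖ with hd
  have hd0 : 0 < d := norm_pos_iff.2 ha
  set e := d⁻¹ • a with he
  set z := d⁻¹ • y with hz
  have nz : ‖y‖ = d * ‖z‖ := by
    rw [hz, norm_smul, norm_inv, Real.norm_of_nonneg hd0.le]; field_simp
  have np : ‖a + y‖ = d * ‖e + z‖ := by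
    rw [hz, he, ← smul_add, norm_smul, norm_inv, Real.norm_of_nonneg hd0.le]; field_simp
  have nm : ‖a - y‖ = d * ‖e - z‖ := by
    rw [hz, he, ← smul_sub, norm_smul, norm_inv, Real.norm_of_nonneg hd0.le]; field_simp
  have hy0 : 0 < ‖y‖ := norm_pos_iff.2 hy
  set r := ‖z‖ with hr
  have hr0 : 0 < r := by
    by_contra h
    have : r = 0 := le_antisymm (not_lt.1 h) (norm_nonneg _)
    rw [nz, this] at hy0; simp at hy0
  have hw := w_bound q M C ‖y‖ hq hC hM hy0
  have hw0 : 0 ≤ (M / (1 + M ^ 2 * ‖y‖ ^ 2)) ^ q := by positivity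
  have hu0 := rpow_bound m L C d hm hC hL hd0
  have hdd : d ^ (-(2 * (m + q))) = d ^ (-(2 * q)) * d ^ (-(2 * m)) := by
    rw [← Real.rpow_add hd0]; congr 1; ring
  have hwz : ‖y‖ ^ (-(2 * q)) = d ^ (-(2 * q)) * r ^ (-(2 * q)) := by
    rw [nz, Real.mul_rpow hd0.le hr0.le]
  rw [hwz] at hw
  have F3n : ∀ v : EuclideanSpace ℝ (Fin n), 0 ≤ (Metric.ball (0 : EuclideanSpace ℝ (Fin n))
      1).indicator (fun z => ‖z‖ ^ (-(2 * m))) v := fun v =>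
    Set.indicator_nonneg (fun z _ => by positivity) v
  by_cases hcase : z ∈ Metric.ball (0 : EuclideanSpace ℝ (Fin n)) (1 / 4)
  · have hHH : r ^ (2 - 2 * q) ≤ HH n m q e z := by
      unfold HH
      rw [Set.indicator_of_mem hcase, Set.indicator_of_notMem (by simpa using hcase)]
      have : 0 ≤ (4 : ℝ) ^ (2 * q) := by positivity
      nlinarith [mul_nonneg this (add_nonneg (F3n (e + z)) (F3n (e - z)))]
    simp only [Metric.mem_ball, dist_zero_right] at hcase
    rw [← hr] at hcase
    set u := 1 + L ^ 2 * d ^ 2 with hu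
    have hu1 : 1 ≤ u := by have : 0 ≤ L ^ 2 * d ^ 2 := by positivity
                           linarith
    have hupos : 0 < u := by linarith
    have hip : |inner ℝ a y| ≤ d * (d * r) := by
      rw [← nz]; exact abs_real_inner_le_norm a y
    have hLu : L ^ 2 / u * d ^ 2 ≤ 1 := by
      rw [div_mul_eq_mul_div, div_le_one hupos]; linarith
    have hLu0 : 0 ≤ L ^ 2 / u := by positivity
    have key : ∀ t : ℝ, |t| ≤ d * (d * r) →
        |L ^ 2 / u * (‖y‖ ^ 2 + 2 * t)| ≤ r ^ 2 + 2 * r := by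
      intro t ht
      rw [abs_mul, abs_of_nonneg hLu0]
      have : |‖y‖ ^ 2 + 2 * t| ≤ d ^ 2 * (r ^ 2 + 2 * r) := by
        rw [nz]
        rw [abs_le] at *
        constructor <;> nlinarith [sq_nonneg (d * r)]
      calc L ^ 2 / u * |‖y‖ ^ 2 + 2 * t| ≤ L ^ 2 / u * (d ^ 2 * (r ^ 2 + 2 * r)) := by gcongr
        _ = (L ^ 2 / u * d ^ 2) * (r ^ 2 + 2 * r) := by ring
        _ ≤ 1 * (r ^ 2 + 2 * r) := by gcongr
        _ = _ := one_mul _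
    have k1 := key (inner ℝ a y) hip
    have k2 := key (-inner ℝ a y) (by rwa [abs_neg])
    have hr1 : r ^ 2 + 2 * r ≤ 9 / 4 * r := by nlinarith
    have hr2 : r ^ 2 + 2 * r ≤ 9 / 16 := by nlinarith
    have hsum : |L ^ 2 / u * (‖y‖ ^ 2 + 2 * inner ℝ a y) +
        L ^ 2 / u * (‖y‖ ^ 2 + 2 * -inner ℝ a y)| ≤ 2 * r ^ 2 := by
      rw [nz, show L ^ 2 / u * ((d * r) ^ 2 + 2 * inner ℝ a y) +
        L ^ 2 / u * ((d * r) ^ 2 + 2 * -inner ℝ a y) = (L ^ 2 / u * d ^ 2) * (2 * r ^ 2) by ring,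
        abs_of_nonneg (by positivity)]
      nlinarith [sq_nonneg r]
    have hh := hS u _ _ r hu1 (k1.trans hr2) (k2.trans hr2) hsum (k1.trans hr1) (k2.trans hr1)
    have e1 : u * (1 + L ^ 2 / u * (‖y‖ ^ 2 + 2 * inner ℝ a y)) = 1 + L ^ 2 * ‖a + y‖ ^ 2 := by
      rw [norm_add_sq_real, ← hd, mul_add, mul_one, ← mul_assoc, mul_div_cancel₀ _ hupos.ne', hu]
      ring
    have e2 : u * (1 + L ^ 2 / u * (‖y‖ ^ 2 + 2 * -inner ℝ a y)) = 1 + L ^ 2 * ‖a - y‖ ^ 2 := by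
      rw [norm_sub_sq_real, ← hd, mul_add, mul_one, ← mul_assoc, mul_div_cancel₀ _ hupos.ne', hu]
      ring
    rw [e1, e2] at hh
    have hrr : r ^ (2 - 2 * q) = r ^ (-(2 * q)) * r ^ 2 := by
      rw [sub_eq_neg_add, Real.rpow_add hr0, Real.rpow_two]
    calc _ ≤ (C ^ (-q) * (d ^ (-(2 * q)) * r ^ (-(2 * q)))) *
          (K * (C ^ (-(2 * m)) * d ^ (-(2 * m))) * r ^ 2) := by
          refine mul_le_mul hw (hh.trans ?_) (abs_nonneg _) (by positivity)
          gcongr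
      _ = C ^ (-q) * C ^ (-(2 * m)) * K * d ^ (-(2 * (m + q))) * r ^ (2 - 2 * q) := by
          rw [hdd, hrr]; ring
      _ ≤ C ^ (-q) * C ^ (-(2 * m)) * (K + 1) * d ^ (-(2 * (m + q))) * HH n m q e z := by
          gcongr; linarith
  · have hHH : r ^ (-(2 * q)) * (‖e + z‖ ^ (-(2 * m)) + ‖e - z‖ ^ (-(2 * m)) + 2)
        ≤ HH n m q e z := by
      have hcase' : 1 / 4 ≤ r := by simpa using hcase
      unfold HH
      rw [Set.indicator_of_notMem hcase, Set.indicator_of_mem (by simpa using hcase)]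
      have := HH_prod n m q r hm hq hcase' (e + z)
      have := HH_prod n m q r hm hq hcase' (e - z)
      linarith
    have hay0 : 0 < ‖a + y‖ := norm_pos_iff.2 hay
    have hay0' : 0 < ‖a - y‖ := norm_pos_iff.2 hay'
    have one_le : ∀ t : ℝ, 1 ≤ 1 + L ^ 2 * t ^ 2 := fun t => by
      have : 0 ≤ L ^ 2 * t ^ 2 := by positivity
      linarith
    have b1 := (psi_abs m _ (one_le ‖a + y‖)).trans (rpow_bound m L C _ hm hC hL hay0)
    have b2 := (psi_abs m _ (one_le ‖a - y‖)).trans (rpow_bound m L C _ hm hC hL hay0')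
    have b3 := (psi_abs m _ (one_le d)).trans hu0
    have hh : |psi m (1 + L ^ 2 * ‖a + y‖ ^ 2)
        + psi m (1 + L ^ 2 * ‖a - y‖ ^ 2) - 2 * psi m (1 + L ^ 2 * d ^ 2)| ≤
        C ^ (-(2 * m)) * d ^ (-(2 * m)) * (‖e + z‖ ^ (-(2 * m)) + ‖e - z‖ ^ (-(2 * m)) + 2) := by
      rw [np, Real.mul_rpow hd0.le (norm_nonneg _), ← np] at b1
      rw [nm, Real.mul_rpow hd0.le (norm_nonneg _), ← nm] at b2
      rw [abs_le] at *
      constructor <;> nlinarith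
    calc _ ≤ (C ^ (-q) * (d ^ (-(2 * q)) * r ^ (-(2 * q)))) *
          (C ^ (-(2 * m)) * d ^ (-(2 * m)) * (‖e + z‖ ^ (-(2 * m)) + ‖e - z‖ ^ (-(2 * m)) + 2)) :=
          mul_le_mul hw hh (abs_nonneg _) (by positivity)
      _ = C ^ (-q) * C ^ (-(2 * m)) * 1 * d ^ (-(2 * (m + q))) *
          (r ^ (-(2 * q)) * (‖e + z‖ ^ (-(2 * m)) + ‖e - z‖ ^ (-(2 * m)) + 2)) := by
          rw [hdd]; ring
      _ ≤ C ^ (-q) * C ^ (-(2 * m)) * (K + 1) * d ^ (-(2 * (m + q))) * HH n m q e z := by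
          gcongr; linarith

open MeasureTheory in
lemma w_int (n : ℕ) (q M : ℝ) (hq : (n : ℝ) < 2 * q) (hM : 0 < M) :
    Integrable (fun y : EuclideanSpace ℝ (Fin n) => (M / (1 + M ^ 2 * ‖y‖ ^ 2)) ^ q) ∧
    ∫ y : EuclideanSpace ℝ (Fin n), (M / (1 + M ^ 2 * ‖y‖ ^ 2)) ^ q =
      M ^ (q - n) * ∫ y : EuclideanSpace ℝ (Fin n), (1 + ‖y‖ ^ 2) ^ (-q) := by
  have h := integrable_rpow_neg_one_add_norm_sq (E := EuclideanSpace ℝ (Fin n)) (μ := volume)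
    (r := 2 * q) (by simpa using hq)
  rw [show -(2 * q) / 2 = -q by ring] at h
  have e : (fun y : EuclideanSpace ℝ (Fin n) => (M / (1 + M ^ 2 * ‖y‖ ^ 2)) ^ q) =
      fun y => M ^ q * (fun x : EuclideanSpace ℝ (Fin n) => (1 + ‖x‖ ^ 2) ^ (-q)) (M • y) := by
    ext y
    simp only
    rw [norm_smul, Real.norm_of_nonneg hM.le, mul_pow, Real.div_rpow hM.le (by positivity),
      Real.rpow_neg (by positivity), div_eq_mul_inv]
  rw [e]
  constructor
  · exact (h.comp_smul hM.ne').const_mul _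
  · rw [integral_const_mul, Measure.integral_comp_smul volume
      (fun x : EuclideanSpace ℝ (Fin n) => (1 + ‖x‖ ^ 2) ^ (-q)) M, abs_of_pos (by positivity), smul_eq_mul,
      Real.rpow_sub hM, finrank_euclideanSpace, Fintype.card_fin, Real.rpow_natCast]
    ring

open MeasureTheory in
lemma core (n : ℕ) (hn : 0 < n) (m q C : ℝ) (hm0 : 0 ≤ m) (hmq : m + q = n)
    (hq : (n : ℝ) < 2 * q) (hq' : 2 * q < n + 2) (hC : 0 < C) :
    ∃ K : ℝ, 0 ≤ K ∧ ∀ (a : EuclideanSpace ℝ (Fin n)) (L M : ℝ), C ≤ L → C ≤ M → a ≠ 0 →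
      |(∫ y : EuclideanSpace ℝ (Fin n), (M / (1 + M ^ 2 * ‖y‖ ^ 2)) ^ q *
          psi m (1 + L ^ 2 * ‖a + y‖ ^ 2)) -
        (M ^ (-m) * ∫ y : EuclideanSpace ℝ (Fin n), (1 + ‖y‖ ^ 2) ^ (-q)) *
          psi m (1 + L ^ 2 * ‖a‖ ^ 2)| ≤ K * ‖a‖ ^ (-(n : ℝ)) := by
  have hn' : (0 : ℝ) < n := by exact_mod_cast hn
  obtain ⟨K, hK, hp⟩ := pointwise n m q C hm0 (by linarith) hC
  obtain ⟨A, hA, hH⟩ := HH_int n hn m q (by linarith) hq hq'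
  refine ⟨K * A, by positivity, fun a L M hL hM ha => ?_⟩
  have hL0 : 0 < L := by linarith
  have hM0 : 0 < M := by linarith
  have hd0 : 0 < ‖a‖ := norm_pos_iff.2 ha
  obtain ⟨wi, wI⟩ := w_int n q M hq hM0
  rw [show q - n = -m by linarith] at wI
  rw [← wI]
  set w := fun y : EuclideanSpace ℝ (Fin n) => (M / (1 + M ^ 2 * ‖y‖ ^ 2)) ^ q with hw
  set g := fun y : EuclideanSpace ℝ (Fin n) => psi m (1 + L ^ 2 * ‖y‖ ^ 2) with hg
  have one_le : ∀ t : ℝ, 1 ≤ 1 + L ^ 2 * t ^ 2 := fun t => by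
    have : 0 ≤ L ^ 2 * t ^ 2 := by positivity
    linarith
  have gb : ∀ y, |g y| ≤ 1 := fun y => (psi_abs m _ (one_le _)).trans
    (Real.rpow_le_one_of_one_le_of_nonpos (one_le _) (by linarith))
  have gm : Measurable g := by simp only [hg, psi]; fun_prop
  have ip : Integrable (fun y => w y * g (a + y)) :=
    wi.mul_bdd (c := 1) (gm.comp (measurable_const_add a)).aestronglyMeasurable
      (Filter.Eventually.of_forall fun y => gb _)
  have im : Integrable (fun y => w y * g (a - y)) :=
    wi.mul_bdd (c := 1) (gm.comp (measurable_const_sub a)).aestronglyMeasurable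
      (Filter.Eventually.of_forall fun y => gb _)
  have esym : ∫ y, w y * g (a - y) = ∫ y, w y * g (a + y) := by
    rw [← integral_neg_eq_self]
    congr 1; ext y
    simp only [hw, norm_neg, sub_neg_eq_add]
  have i0 : Integrable (fun y => w y * (2 * g a)) := wi.mul_const _
  have main : ∫ y, w y * (g (a + y) + g (a - y) - 2 * g a) =
      2 * ((∫ y, w y * g (a + y)) - (∫ y, w y) * g a) := by
    have e : (fun y => w y * (g (a + y) + g (a - y) - 2 * g a)) =
        fun y => (w y * g (a + y) + w y * g (a - y)) - w y * (2 * g a) := by ext y; ring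
    have k1 := integral_sub' (ip.add im) i0
    simp only [Pi.add_apply, Pi.sub_apply] at k1
    rw [e, k1, integral_add ip im, esym, integral_mul_const]
    ring
  obtain ⟨Hi, HI⟩ := hH (‖a‖⁻¹ • a)
  have Hi' := (Hi.comp_smul (inv_ne_zero hd0.ne')).const_mul (K * ‖a‖ ^ (-(2 * (m + q))))
  have bound := norm_integral_le_of_norm_le (f := fun y => w y * (g (a + y) + g (a - y) - 2 * g a))
    Hi' (by
      have hfin : ({0, -a, a} : Set (EuclideanSpace ℝ (Fin n))).Countable :=
        (Set.toFinite _).countable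
      have : Nontrivial (EuclideanSpace ℝ (Fin n)) := ⟨⟨a, 0, ha⟩⟩
      filter_upwards [hfin.ae_notMem volume] with y hy
      simp only [Set.mem_insert_iff, Set.mem_singleton_iff, not_or] at hy
      rw [norm_mul, Real.norm_eq_abs, Real.norm_eq_abs,
        abs_of_nonneg (show 0 ≤ w y by simp only [hw]; positivity)]
      exact hp a y L M hL hM ha hy.1 (fun h => hy.2.1 (eq_neg_of_add_eq_zero_right h))
        (fun h => hy.2.2 (sub_eq_zero.1 h).symm))
  rw [main, integral_const_mul, Measure.integral_comp_inv_smul_of_nonneg _ _ hd0.le, HI,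
    Real.norm_eq_abs, abs_mul, abs_two, smul_eq_mul, finrank_euclideanSpace, Fintype.card_fin,
    ← Real.rpow_natCast, hmq] at bound
  have e3 : ‖a‖ ^ (-(2 * (n : ℝ))) * ‖a‖ ^ (n : ℝ) = ‖a‖ ^ (-(n : ℝ)) := by
    rw [← Real.rpow_add hd0]; congr 1; ring
  have e4 : K * ‖a‖ ^ (-(2 * (n : ℝ))) * (‖a‖ ^ (n : ℝ) * A) = K * A * ‖a‖ ^ (-(n : ℝ)) := by
    rw [← e3]; ring
  rw [e4] at bound
  linarith [abs_nonneg ((∫ y, w y * g (a + y)) - (∫ y, w y) * g a)]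

set_option maxHeartbeats 1000000 in
theorem stmt_18 (n : ℕ) (hn0 : 0 < n) (s C₀ C₁ C₂ : ℝ) (hs0 : 0 < s) (hs1 : s < 1)
    (hn : 2 * s + 2 < (n : ℝ)) (hC₀ : 0 < C₀) (hC₁ : 0 < C₁) (hC₁₂ : C₁ < C₂) :
    -- `C` and `δ₀` depend only on `n, s, C₁, C₂` (and the fixed constant `C₀ = C₀(n,s)`)
    ∃ C > (0 : ℝ), ∃ δ₀ > (0 : ℝ),
      ∀ Pi Ph : EuclideanSpace ℝ (Fin n), ∀ Λi Λh : ℝ,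
        Λi ∈ Set.Icc C₁ C₂ → Λh ∈ Set.Icc C₁ C₂ →
        (Λi / Λh + Λh / Λi + Λi * Λh * ‖Pi - Ph‖ ^ 2) ^ (-(((n : ℝ) - 2 * s) / 2)) ≤ δ₀ →
        |(∫ x : EuclideanSpace ℝ (Fin n),
              (C₀ * (Λh / (1 + Λh ^ 2 * ‖x - Ph‖ ^ 2)) ^ (((n : ℝ) - 2 * s) / 2)) ^
                  (((n : ℝ) + 2 * s) / ((n : ℝ) - 2 * s)) *
                deriv (fun Λ : ℝ =>
                  C₀ * (Λ / (1 + Λ ^ 2 * ‖x - Pi‖ ^ 2)) ^ (((n : ℝ) - 2 * s) / 2)) Λi) -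
            (C₀ ^ (2 * (n : ℝ) / ((n : ℝ) - 2 * s)) *
                ∫ y : EuclideanSpace ℝ (Fin n), (1 + ‖y‖ ^ 2) ^ (-(((n : ℝ) + 2 * s) / 2))) *
              deriv (fun Λ : ℝ =>
                (Λ / Λh + Λh / Λ + Λ * Λh * ‖Pi - Ph‖ ^ 2) ^ (-(((n : ℝ) - 2 * s) / 2))) Λi| ≤
          C * Λi⁻¹ *
            ((Λi / Λh + Λh / Λi + Λi * Λh * ‖Pi - Ph‖ ^ 2) ^ (-(((n : ℝ) - 2 * s) / 2))) ^
              ((n : ℝ) / ((n : ℝ) - 2 * s)) *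
            |Real.log ((Λi / Λh + Λh / Λi + Λi * Λh * ‖Pi - Ph‖ ^ 2) ^
              (-(((n : ℝ) - 2 * s) / 2)))| := by
  have hn0' : (0 : ℝ) < n := by exact_mod_cast hn0
  obtain ⟨m, hm⟩ : ∃ m : ℝ, m = ((n : ℝ) - 2 * s) / 2 := ⟨_, rfl⟩
  obtain ⟨q, hq⟩ : ∃ q : ℝ, q = ((n : ℝ) + 2 * s) / 2 := ⟨_, rfl⟩
  rw [← hm, ← hq]
  have hm1 : 1 < m := by rw [hm]; linarith
  have hm0 : 0 < m := by linarith
  have h2m : (n : ℝ) - 2 * s = 2 * m := by rw [hm]; ring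
  have h2q : (n : ℝ) + 2 * s = 2 * q := by rw [hq]; ring
  rw [h2m, h2q]
  have hq0 : 0 < q := by linarith
  have hC₂ : 0 < C₂ := by linarith
  have hmq : m + q = n := by rw [hm, hq]; ring
  obtain ⟨K, hK, hcore⟩ := core n hn0 m q C₁ hm0.le hmq (by linarith) (by linarith) hC₁
  set I := ∫ y : EuclideanSpace ℝ (Fin n), (1 + ‖y‖ ^ 2) ^ (-q) with hI
  have hI0 : 0 ≤ I := MeasureTheory.integral_nonneg fun y => by positivity
  set c := C₀ ^ (2 * (n : ℝ) / (2 * m)) with hc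
  have hc0 : 0 < c := by positivity
  set B := c * (m * C₂ ^ (m - 1)) *
    (K + C₁ ^ (-m) * I * ((2 + m * (C₂ / C₁) ^ 2) * C₁ ^ (-(2 * (m + 1))))) with hB
  have hB0 : 0 ≤ B := by positivity
  set Q₀ := 2 * (C₂ / C₁) + C₂ ^ 2 with hQ₀
  have hQ₀0 : 0 < Q₀ := by positivity
  refine ⟨(B + 1) * C₂ * Q₀ ^ ((n : ℝ) / 2), by positivity, min (Q₀ ^ (-m)) (Real.exp (-1)),
    by positivity, ?_⟩
  intro P P' L M hL hM hε
  have hL0 : 0 < L := by linarith [hL.1]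
  have hM0 : 0 < M := by linarith [hM.1]
  obtain ⟨a, ha⟩ : ∃ a : EuclideanSpace ℝ (Fin n), a = P' - P := ⟨_, rfl⟩
  have hd : ‖P - P'‖ = ‖a‖ := by rw [ha, norm_sub_rev]
  rw [hd] at hε ⊢
  -- size of Q
  have r1 : L / M ≤ C₂ / C₁ := div_le_div₀ hC₂.le hL.2 hC₁ hM.1
  have r2 : M / L ≤ C₂ / C₁ := div_le_div₀ hC₂.le hM.2 hC₁ hL.1
  have r3 : L * M ≤ C₂ ^ 2 := by
    rw [sq]; exact mul_le_mul hL.2 hM.2 hM0.le hC₂.le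
  have hQpos : 0 < L / M + M / L + L * M * ‖a‖ ^ 2 := by positivity
  have hd1 : 1 ≤ ‖a‖ := by
    by_contra hcon
    push Not at hcon
    have h1 : ‖a‖ ^ 2 < 1 := by nlinarith [norm_nonneg a]
    have h2 : L * M * ‖a‖ ^ 2 < L * M * 1 := mul_lt_mul_of_pos_left h1 (by positivity)
    have h3 : L / M + M / L + L * M * ‖a‖ ^ 2 < Q₀ := by rw [hQ₀]; linarith
    have h4 := Real.rpow_lt_rpow_of_neg hQpos h3 (show -m < 0 by linarith)
    have h5 := hε.trans (min_le_left _ _)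
    linarith
  have hd0 : 0 < ‖a‖ := by linarith
  have ha0 : a ≠ 0 := norm_pos_iff.1 hd0
  have hQle : L / M + M / L + L * M * ‖a‖ ^ 2 ≤ Q₀ * ‖a‖ ^ 2 := by
    have h1 : 1 ≤ ‖a‖ ^ 2 := one_le_pow₀ hd1
    have h2 : L * M * ‖a‖ ^ 2 ≤ C₂ ^ 2 * ‖a‖ ^ 2 := by gcongr
    have h3 : 0 ≤ C₂ / C₁ := by positivity
    rw [hQ₀]
    nlinarith
  rw [deriv_eps m L M ‖a‖ hL0 hM0]
  -- the integral
  have hcc : C₀ ^ (2 * q / (2 * m)) * C₀ = c := by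
    rw [hc, ← Real.rpow_add_one hC₀.ne']
    congr 1
    rw [← hmq]; field_simp; ring
  have hint : (∫ x : EuclideanSpace ℝ (Fin n),
      (C₀ * (M / (1 + M ^ 2 * ‖x - P'‖ ^ 2)) ^ m) ^ (2 * q / (2 * m)) *
        deriv (fun Λ : ℝ => C₀ * (Λ / (1 + Λ ^ 2 * ‖x - P‖ ^ 2)) ^ m) L) =
      c * (m * L ^ (m - 1)) * ∫ y : EuclideanSpace ℝ (Fin n), (M / (1 + M ^ 2 * ‖y‖ ^ 2)) ^ q *
          psi m (1 + L ^ 2 * ‖a + y‖ ^ 2) := by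
    rw [← MeasureTheory.integral_const_mul, ← MeasureTheory.integral_add_right_eq_self _ P']
    congr 1
    ext x
    rw [deriv_U m C₀ L _ hL0, Real.mul_rpow hC₀.le (by positivity), ← Real.rpow_mul (by positivity),
      show m * (2 * q / (2 * m)) = q by field_simp, ← hcc,
      show x + P' - P = a + x by rw [ha]; abel, add_sub_cancel_right]
    ring
  rw [hint]
  have hk := hcore a L M hL.1 hM.1 ha0
  set J := ∫ y : EuclideanSpace ℝ (Fin n), (M / (1 + M ^ 2 * ‖y‖ ^ 2)) ^ q *
          psi m (1 + L ^ 2 * ‖a + y‖ ^ 2) with hJ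
  have hu1 : 1 ≤ 1 + L ^ 2 * ‖a‖ ^ 2 := by
    have : 0 ≤ L ^ 2 * ‖a‖ ^ 2 := by positivity
    linarith
  have hcl := psi_close m (1 + L ^ 2 * ‖a‖ ^ 2) ((L / M) ^ 2) hm0.le hu1 (by positivity)
  have hub := rpow_bound (m + 1) L C₁ ‖a‖ (by linarith) hC₁ hL.1 hd0
  have hdn : ‖a‖ ^ (-(2 * (m + 1))) ≤ ‖a‖ ^ (-(n : ℝ)) :=
    Real.rpow_le_rpow_of_exponent_le hd1 (by linarith)
  have hcl2 : |psi m ((1 + L ^ 2 * ‖a‖ ^ 2) + (L / M) ^ 2) - psi m (1 + L ^ 2 * ‖a‖ ^ 2)| ≤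
      (2 + m * (C₂ / C₁) ^ 2) * C₁ ^ (-(2 * (m + 1))) * ‖a‖ ^ (-(n : ℝ)) := by
    have t1 : 2 + m * (L / M) ^ 2 ≤ 2 + m * (C₂ / C₁) ^ 2 := by
      have t3 : (L / M) ^ 2 ≤ (C₂ / C₁) ^ 2 := pow_le_pow_left₀ (by positivity) r1 2
      have t4 := mul_le_mul_of_nonneg_left t3 hm0.le
      linarith
    have t2 := hub.trans (mul_le_mul_of_nonneg_left hdn (Real.rpow_nonneg hC₁.le (-(2 * (m + 1)))))
    refine hcl.trans ?_
    rw [mul_assoc]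
    exact mul_le_mul t1 t2 (Real.rpow_nonneg (by linarith) _) (by positivity)
  set ψv := psi m ((1 + L ^ 2 * ‖a‖ ^ 2) + (L / M) ^ 2)
  set ψu := psi m (1 + L ^ 2 * ‖a‖ ^ 2)
  clear_value J ψv ψu I c B Q₀
  have hMm : M ^ (-m) ≤ C₁ ^ (-m) := Real.rpow_le_rpow_of_nonpos hC₁ hM.1 (by linarith)
  have hdiff : |J - M ^ (-m) * I * ψv| ≤
      (K + C₁ ^ (-m) * I * ((2 + m * (C₂ / C₁) ^ 2) * C₁ ^ (-(2 * (m + 1))))) * ‖a‖ ^ (-(n : ℝ)) := by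
    have e : J - M ^ (-m) * I * ψv = (J - M ^ (-m) * I * ψu) - M ^ (-m) * I * (ψv - ψu) := by ring
    rw [e]
    calc _ ≤ |J - M ^ (-m) * I * ψu| + |M ^ (-m) * I * (ψv - ψu)| := abs_sub _ _
      _ ≤ K * ‖a‖ ^ (-(n : ℝ)) + C₁ ^ (-m) * I *
          ((2 + m * (C₂ / C₁) ^ 2) * C₁ ^ (-(2 * (m + 1))) * ‖a‖ ^ (-(n : ℝ))) := by
          rw [abs_mul, abs_of_nonneg (mul_nonneg (Real.rpow_nonneg hM0.le _) hI0)]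
          exact add_le_add hk (mul_le_mul (mul_le_mul_of_nonneg_right hMm hI0) hcl2 (abs_nonneg _)
            (mul_nonneg (Real.rpow_nonneg hC₁.le _) hI0))
      _ = _ := by ring
  have hfinal : |c * (m * L ^ (m - 1)) * J - c * I * (m * L ^ (m - 1) * M ^ (-m) * ψv)| ≤
      B * ‖a‖ ^ (-(n : ℝ)) := by
    have e : c * (m * L ^ (m - 1)) * J - c * I * (m * L ^ (m - 1) * M ^ (-m) * ψv) =
      c * (m * L ^ (m - 1)) * (J - M ^ (-m) * I * ψv) := by ring
    rw [e, abs_mul, abs_of_nonneg (by positivity), hB, mul_assoc (c * (m * C₂ ^ (m - 1)))]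
    have hLm : L ^ (m - 1) ≤ C₂ ^ (m - 1) := Real.rpow_le_rpow hL0.le hL.2 (by linarith)
    gcongr
  refine hfinal.trans ?_
  -- lower bound of the right-hand side
  set Q := L / M + M / L + L * M * ‖a‖ ^ 2 with hQ
  have hlog : 1 ≤ |Real.log (Q ^ (-m))| := by
    have h1 : Real.log (Q ^ (-m)) ≤ -1 := by
      rw [← Real.log_exp (-1)]
      exact Real.log_le_log (by positivity) (hε.trans (min_le_right _ _))
    rw [abs_of_neg (by linarith)]; linarith
  have hQn : (Q ^ (-m)) ^ ((n : ℝ) / (2 * m)) = Q ^ (-((n : ℝ) / 2)) := by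
    rw [← Real.rpow_mul hQpos.le]; congr 1; field_simp
  have hQn2 : Q₀ ^ (-((n : ℝ) / 2)) * ‖a‖ ^ (-(n : ℝ)) ≤ Q ^ (-((n : ℝ) / 2)) := by
    have e : Q₀ ^ (-((n : ℝ) / 2)) * ‖a‖ ^ (-(n : ℝ)) = (Q₀ * ‖a‖ ^ 2) ^ (-((n : ℝ) / 2)) := by
      rw [Real.mul_rpow hQ₀0.le (by positivity), ← Real.rpow_two, ← Real.rpow_mul hd0.le]
      congr 2; ring
    rw [e]
    exact Real.rpow_le_rpow_of_nonpos hQpos hQle (by linarith)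
  have hLinv : C₂⁻¹ ≤ L⁻¹ := by
    rw [inv_le_inv₀ hC₂ hL0]; exact hL.2
  rw [hQn]
  have eQ : Q₀ ^ ((n : ℝ) / 2) * Q₀ ^ (-((n : ℝ) / 2)) = 1 := by
    rw [← Real.rpow_add hQ₀0, add_neg_cancel, Real.rpow_zero]
  calc B * ‖a‖ ^ (-(n : ℝ)) ≤ (B + 1) * ‖a‖ ^ (-(n : ℝ)) := by gcongr; linarith
    _ = (B + 1) * (C₂ * C₂⁻¹) * (Q₀ ^ ((n : ℝ) / 2) * Q₀ ^ (-((n : ℝ) / 2))) * ‖a‖ ^ (-(n : ℝ)) := by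
        rw [eQ, mul_inv_cancel₀ hC₂.ne']; ring
    _ = (B + 1) * C₂ * Q₀ ^ ((n : ℝ) / 2) * C₂⁻¹ *
        (Q₀ ^ (-((n : ℝ) / 2)) * ‖a‖ ^ (-(n : ℝ))) * 1 := by ring
    _ ≤ (B + 1) * C₂ * Q₀ ^ ((n : ℝ) / 2) * L⁻¹ * Q ^ (-((n : ℝ) / 2)) *
        |Real.log (Q ^ (-m))| := by gcongr
end

section
/- Let c_1, c_2 > 0 be fixed constants, m ≥ 1, N = (m+1)^k, and define A_{ih} = (λl)^{n−2s} |X^i − X^h|^{−(n−2s)} for i ≠ h and A_{ii} = 0, and F(z) = (c_2/2) Σ_{i} Σ_{h ≠ i} A_{ih} z_i z_h − ((n−2s) c_1/(2β)) Σ_{h=1}^{N} z_h^{2β/(n−2s)} for z ∈ ℝ^N. Then F attains its maximum over ℝ^N at some point b = (b_1,…,b_N) with all components positive, b satisfies c_2 Σ_{h ≠ i} A_{ih} b_h = c_1 b_i^{2β/(n−2s) − 1} for every i, and there exist constants 0 < C_1' ≤ C_2', depending only on n, s, k, β, c_1, c_2 (in particular independent of m and l), such that C_1' ≤ b_i ≤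 C_2' for all i = 1,…,N. -/
open Finset in
theorem aux_deriv {ι : Type*} [Fintype ι] [DecidableEq ι] (A : ι → ι → ℝ) (hsym : ∀ i h, A i h = A h i)
    (c₁ c₂ p : ℝ) (hp : 2 < p) (b : ι → ℝ) (i : ι) :
    HasDerivAt (fun t : ℝ => c₂ / 2 * (∑ j, ∑ h, A j h * (b j + t * (Pi.single i (1:ℝ) : ι → ℝ) j) * (b h + t * (Pi.single i (1:ℝ) : ι → ℝ) h))
      - c₁ / p * ∑ h, (b h + t * (Pi.single i (1:ℝ) : ι → ℝ) h) ^ p)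
      (c₂ * (∑ h, A i h * b h) - c₁ * b i ^ (p - 1)) 0 := by
  have h1 : ∀ j, HasDerivAt (fun t : ℝ => b j + t * (Pi.single i (1:ℝ) : ι → ℝ) j) ((Pi.single i (1:ℝ) : ι → ℝ) j) 0 := by
    intro j
    have := ((hasDerivAt_id (0:ℝ)).mul_const ((Pi.single i (1:ℝ) : ι → ℝ) j)).const_add (b j)
    simpa using this
  have h2 : HasDerivAt (fun t : ℝ => ∑ j, ∑ h, A j h * (b j + t * (Pi.single i (1:ℝ) : ι → ℝ) j) * (b h + t * (Pi.single i (1:ℝ) : ι → ℝ) h))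
      (∑ j, ∑ h, (A j h * (Pi.single i (1:ℝ) : ι → ℝ) j * b h + A j h * b j * (Pi.single i (1:ℝ) : ι → ℝ) h)) 0 := by
    refine HasDerivAt.fun_sum fun j _ => HasDerivAt.fun_sum fun h _ => ?_
    have := ((h1 j).const_mul (A j h)).fun_mul (h1 h)
    simpa using this
  have h3 : HasDerivAt (fun t : ℝ => ∑ h, (b h + t * (Pi.single i (1:ℝ) : ι → ℝ) h) ^ p)
      (∑ h, ((Pi.single i (1:ℝ) : ι → ℝ) h * p * b h ^ (p - 1))) 0 := by
    refine HasDerivAt.fun_sum fun h _ => ?_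
    have := (h1 h).rpow_const (p := p) (Or.inr (by linarith))
    simpa using this
  have h4 := (h2.const_mul (c₂ / 2)).fun_sub (h3.const_mul (c₁ / p))
  have e1 : ∑ h, ((Pi.single i (1:ℝ) : ι → ℝ) h * p * b h ^ (p - 1)) = p * b i ^ (p - 1) := by
    rw [Finset.sum_eq_single i]
    · simp
    · intro j _ hj; simp [hj]
    · simp
  have e2 : ∑ j, ∑ h, (A j h * (Pi.single i (1:ℝ) : ι → ℝ) j * b h + A j h * b j * (Pi.single i (1:ℝ) : ι → ℝ) h) = 2 * ∑ h, A i h * b h := by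
    simp only [Finset.sum_add_distrib]
    have a1 : ∑ j, ∑ h, A j h * (Pi.single i (1:ℝ) : ι → ℝ) j * b h = ∑ h, A i h * b h := by
      rw [Finset.sum_eq_single i]
      · simp
      · intro j _ hj; simp [hj]
      · simp
    have a2 : ∑ j, ∑ h, A j h * b j * (Pi.single i (1:ℝ) : ι → ℝ) h = ∑ h, A i h * b h := by
      refine Finset.sum_congr rfl fun j _ => ?_
      rw [Finset.sum_eq_single i]
      · simp [hsym i j]
      · intro j _ hj; simp [hj]
      · simp
    rw [a1, a2]; ring
  rw [e1, e2] at h4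
  have hp0 : p ≠ 0 := by linarith
  have e3 : c₂ * (∑ h, A i h * b h) - c₁ * b i ^ (p - 1) =
      c₂ / 2 * (2 * ∑ h, A i h * b h) - c₁ / p * (p * b i ^ (p - 1)) := by
    field_simp
  rw [e3]
  exact h4

theorem aux_deriv_nonpos (f : ℝ → ℝ) (D : ℝ) (hf : HasDerivAt f D 0) (hm : ∀ t, 0 ≤ t → f t ≤ f 0) : D ≤ 0 := by
  have h := hf.hasDerivWithinAt (s := Set.Ioi 0)
  rw [hasDerivWithinAt_iff_tendsto_slope' (by simp)] at h
  refine le_of_tendsto h ?_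
  filter_upwards [self_mem_nhdsWithin] with t ht
  have ht' : 0 < t := ht
  rw [slope_def_field]
  apply div_nonpos_of_nonpos_of_nonneg
  · linarith [hm t ht'.le]
  · linarith

theorem aux_quad {ι : Type*} [Fintype ι] (A : ι → ι → ℝ) (hsym : ∀ i h, A i h = A h i)
    (hA : ∀ i h, 0 ≤ A i h) (S : ℝ) (hS : ∀ i, ∑ h, A i h ≤ S) (z : ι → ℝ) :
    ∑ i, ∑ h, A i h * z i * z h ≤ S * ∑ i, z i ^ 2 := by
  have h1 : ∑ i, ∑ h, A i h * z i * z h ≤ ∑ i, ∑ h, (A i h * z i ^ 2 / 2 + A i h * z h ^ 2 / 2) := by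
    refine Finset.sum_le_sum fun i _ => Finset.sum_le_sum fun h _ => ?_
    nlinarith [mul_nonneg (hA i h) (sq_nonneg (z i - z h))]
  have h2 : ∑ i, ∑ h, A i h * z h ^ 2 / 2 = ∑ i, ∑ h, A i h * z i ^ 2 / 2 := by
    rw [Finset.sum_comm]
    exact Finset.sum_congr rfl fun i _ => Finset.sum_congr rfl fun h _ => by rw [hsym]
  simp only [Finset.sum_add_distrib] at h1
  rw [h2] at h1
  have h3 : ∑ i, ∑ h, A i h * z i ^ 2 / 2 ≤ S * (∑ i, z i ^ 2) / 2 := by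
    rw [Finset.mul_sum, Finset.sum_div]
    refine Finset.sum_le_sum fun i _ => ?_
    rw [← Finset.sum_div, ← Finset.sum_mul]
    have := mul_le_mul_of_nonneg_right (hS i) (sq_nonneg (z i))
    linarith
  linarith

theorem aux_max {ι : Type*} [Fintype ι] (A : ι → ι → ℝ) (hsym : ∀ i h, A i h = A h i)
    (hA : ∀ i h, 0 ≤ A i h) (S : ℝ) (hS1 : 1 ≤ S) (hS : ∀ i, ∑ h, A i h ≤ S) (c₁ c₂ p : ℝ)
    (hp : 2 < p) (hc₁ : 0 < c₁) (hc₂ : 0 < c₂) (F : (ι → ℝ) → ℝ)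
    (hF : ∀ z, F z = c₂ / 2 * (∑ i, ∑ h, A i h * z i * z h) - c₁ / p * ∑ h, z h ^ p) :
    ∃ b : ι → ℝ, (∀ i, 0 ≤ b i) ∧ ∀ z : ι → ℝ, (∀ i, 0 ≤ z i) → F z ≤ F b := by
  have hp0 : 0 < p := by linarith
  set a : ℝ := c₂ / 2 * S with ha
  have ha0 : 0 < a := by positivity
  set c : ℝ := c₁ / p with hc
  have hc0 : 0 < c := by positivity
  set G : ℝ → ℝ := fun t => a * t ^ 2 - c * t ^ p with hG
  have hGf : ∀ t : ℝ, 0 < t → G t = t ^ 2 * (a - c * t ^ (p - 2)) := by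
    intro t ht
    have : t ^ p = t ^ 2 * t ^ (p - 2) := by
      rw [← Real.rpow_natCast t 2, ← Real.rpow_add ht]; congr 1; push_cast; ring
    simp only [hG, this]; ring
  have hGlim : Filter.Tendsto G Filter.atTop Filter.atBot := by
    have h1 : Filter.Tendsto (fun t : ℝ => t ^ 2 * (a - c * t ^ (p - 2))) Filter.atTop Filter.atBot := by
      apply Filter.Tendsto.atTop_mul_atBot₀
      · exact Filter.tendsto_pow_atTop (by norm_num)
      · have h2 : Filter.Tendsto (fun t : ℝ => c * t ^ (p - 2)) Filter.atTop Filter.atTop :=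
          (tendsto_rpow_atTop (by linarith)).const_mul_atTop hc0
        exact Filter.tendsto_atBot_add_const_left _ a (Filter.tendsto_neg_atTop_atBot.comp h2)
    refine h1.congr' ?_
    filter_upwards [Filter.eventually_gt_atTop 0] with t ht using (hGf t ht).symm
  have hGc : Continuous G := by
    have : Continuous fun t : ℝ => t ^ p := Real.continuous_rpow_const hp0.le
    fun_prop
  obtain ⟨K, hK0, hK⟩ : ∃ K : ℝ, 0 ≤ K ∧ ∀ t, 0 ≤ t → G t ≤ K := by
    obtain ⟨T, hT⟩ := (Filter.eventually_atTop.1 (hGlim.eventually (Filter.eventually_le_atBot 0)))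
    obtain ⟨K, hK⟩ := (isCompact_Icc (a := (0:ℝ)) (b := T)).bddAbove_image hGc.continuousOn
    refine ⟨max K 0, le_max_right _ _, fun t ht => ?_⟩
    by_cases h : t ≤ T
    · exact le_max_of_le_left (hK ⟨t, ⟨ht, h⟩, rfl⟩)
    · exact le_max_of_le_right (hT t (not_le.1 h).le)
  have hFG : ∀ z, F z ≤ ∑ i, G (z i) := by
    intro z
    have := mul_le_mul_of_nonneg_left (aux_quad A hsym hA S hS z) (by positivity : 0 ≤ c₂ / 2)
    rw [← mul_assoc, ← ha] at this
    rw [hF, Finset.sum_sub_distrib, ← Finset.mul_sum, ← Finset.mul_sum]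
    linarith
  obtain ⟨R, hR⟩ := (Filter.eventually_atTop.1 (hGlim.eventually
    (Filter.eventually_le_atBot (-(Fintype.card ι * K)))))
  have hFc : Continuous F := by
    have : F = fun z => c₂ / 2 * (∑ i, ∑ h, A i h * z i * z h) - c₁ / p * ∑ h, z h ^ p := funext hF
    rw [this]
    have h3 : ∀ h : ι, Continuous fun z : ι → ℝ => z h ^ p := fun h =>
      (Real.continuous_rpow_const hp0.le).comp (continuous_apply h)
    fun_prop
  have hF0 : F 0 = 0 := by simp [hF, Real.zero_rpow hp0.ne']
  obtain ⟨b, hb, hmax⟩ := (isCompact_Icc (a := (0 : ι → ℝ)) (b := fun _ => max R 0)).exists_isMaxOn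
    ⟨0, by simp, fun i => by simp⟩ hFc.continuousOn
  refine ⟨b, hb.1, fun z hz => ?_⟩
  by_cases h : ∀ i, z i ≤ max R 0
  · exact hmax ⟨hz, h⟩
  · push Not at h
    obtain ⟨i, hi⟩ := h
    have h1 : F z ≤ 0 := by
      classical
      refine (hFG z).trans ?_
      rw [← Finset.add_sum_erase _ _ (Finset.mem_univ i)]
      have h2 : ∑ j ∈ Finset.univ.erase i, G (z j) ≤ Fintype.card ι * K := by
        calc _ ≤ ∑ j ∈ Finset.univ.erase i, K := Finset.sum_le_sum fun j _ => hK _ (hz j)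
          _ ≤ ∑ j : ι, K := Finset.sum_le_sum_of_subset_of_nonneg (Finset.erase_subset _ _) fun _ _ _ => hK0
          _ = _ := by simp
      have h3 := hR (z i) ((le_max_left _ _).trans hi.le)
      linarith
    have h2 : F 0 ≤ F b := hmax ⟨le_refl _, fun i => by simp⟩
    linarith

theorem aux_main {ι : Type*} [Fintype ι] [Nonempty ι] (A : ι → ι → ℝ) (hsym : ∀ i h, A i h = A h i)
    (hA : ∀ i h, 0 ≤ A i h) (hApos : ∀ i h, i ≠ h → 0 < A i h) (hA1 : ∀ i, ∃ h, A i h = 1)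
    (S : ℝ) (hS1 : 1 ≤ S) (hS : ∀ i, ∑ h, A i h ≤ S) (c₁ c₂ p : ℝ)
    (hp : 2 < p) (hc₁ : 0 < c₁) (hc₂ : 0 < c₂) (F : (ι → ℝ) → ℝ)
    (hF : ∀ z, F z = c₂ / 2 * (∑ i, ∑ h, A i h * z i * z h) - c₁ / p * ∑ h, z h ^ p) :
    ∃ b : ι → ℝ, (∀ i, 0 < b i) ∧ (∀ z : ι → ℝ, (∀ i, 0 ≤ z i) → F z ≤ F b) ∧
      (∀ i, c₂ * (∑ h, A i h * b h) = c₁ * b i ^ (p - 1)) ∧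
      (∀ i, (c₂ / c₁) ^ (1 / (p - 2)) ≤ b i ∧ b i ≤ (c₂ * S / c₁) ^ (1 / (p - 2))) := by
  classical
  have hp0 : 0 < p := by linarith
  have hp2 : 0 < p - 2 := by linarith
  obtain ⟨b, hb0, hmax⟩ := aux_max A hsym hA S hS1 hS c₁ c₂ p hp hc₁ hc₂ F hF
  have hder : ∀ i, HasDerivAt (fun t : ℝ => F (fun j => b j + t * (Pi.single i (1:ℝ) : ι → ℝ) j))
      (c₂ * (∑ h, A i h * b h) - c₁ * b i ^ (p - 1)) 0 := by
    intro i
    have := aux_deriv A hsym c₁ c₂ p hp b i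
    simpa only [hF] using this
  have hpow : ∀ t : ℝ, 0 < t → t ^ p = t ^ 2 * t ^ (p - 2) := by
    intro t ht
    rw [← Real.rpow_natCast t 2, ← Real.rpow_add ht]; congr 1; push_cast; ring
  have hpow1 : ∀ t : ℝ, 0 < t → t ^ (p - 1) = t * t ^ (p - 2) := by
    intro t ht
    nth_rewrite 2 [← Real.rpow_one t]
    rw [← Real.rpow_add ht]; congr 1; ring
  have hne : ∃ h, 0 < b h := by
    by_contra hcon
    push Not at hcon
    have hbz : b = 0 := funext fun i => le_antisymm (hcon i) (hb0 i)
    have hFb : F b = 0 := by rw [hbz]; simp [hF, Real.zero_rpow hp0.ne']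
    obtain ⟨α, hα⟩ : ∃ α, α = c₂ / 2 * ∑ i, ∑ h, A i h := ⟨_, rfl⟩
    obtain ⟨δ, hδ⟩ : ∃ δ, δ = c₁ / p * (Fintype.card ι : ℝ) := ⟨_, rfl⟩
    have hα0 : 0 < α := by
      rw [hα]
      obtain ⟨i⟩ := ‹Nonempty ι›
      obtain ⟨h, hh⟩ := hA1 i
      have h1 : 1 ≤ ∑ i, ∑ h, A i h := by
        rw [← hh]
        exact (Finset.single_le_sum (f := fun h => A i h) (fun h _ => hA i h) (Finset.mem_univ h)).trans
          (Finset.single_le_sum (f := fun i => ∑ h, A i h)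
            (fun i _ => Finset.sum_nonneg fun h _ => hA i h) (Finset.mem_univ i))
      have : 0 < c₂ / 2 := by positivity
      nlinarith
    have hδ0 : 0 < δ := by rw [hδ]; have : 0 < Fintype.card ι := Fintype.card_pos; positivity
    obtain ⟨t, ht0, ht⟩ : ∃ t : ℝ, 0 < t ∧ t ^ (p - 2) = α / (2 * δ) := by
      refine ⟨(α / (2 * δ)) ^ (1 / (p - 2)), by positivity, ?_⟩
      rw [← Real.rpow_mul (by positivity), one_div_mul_cancel hp2.ne', Real.rpow_one]
    have h1 := hmax (fun _ => t) (fun _ => ht0.le)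
    rw [hFb, hF] at h1
    have h2 : c₂ / 2 * (∑ i, ∑ h, A i h * t * t) - c₁ / p * ∑ h : ι, t ^ p = t ^ 2 * (α - δ * t ^ (p - 2)) := by
      simp only [← Finset.sum_mul, Finset.sum_const, Finset.card_univ, nsmul_eq_mul]
      rw [hpow t ht0, hα, hδ]; ring
    rw [h2, ht] at h1
    have h3 : α - δ * (α / (2 * δ)) = α / 2 := by field_simp; ring
    rw [h3] at h1
    have : 0 < t ^ 2 * (α / 2) := by positivity
    linarith
  have hle : ∀ i, c₂ * (∑ h, A i h * b h) - c₁ * b i ^ (p - 1) ≤ 0 := by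
    intro i
    refine aux_deriv_nonpos _ _ (hder i) fun t ht => ?_
    simp only [zero_mul, add_zero]
    refine hmax _ fun j => ?_
    by_cases hj : j = i
    · subst hj; simp; linarith [hb0 j]
    · simp [hj, hb0 j]
  have hpos : ∀ i, 0 < b i := by
    intro i
    by_contra hcon
    have hbi : b i = 0 := le_antisymm (not_lt.1 hcon) (hb0 i)
    obtain ⟨h, hh⟩ := hne
    have hih : i ≠ h := by rintro rfl; linarith
    have h1 := hle i
    rw [hbi, Real.zero_rpow (by linarith)] at h1
    have h2 : A i h * b h ≤ ∑ h, A i h * b h :=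
      Finset.single_le_sum (f := fun h => A i h * b h) (fun h _ => mul_nonneg (hA i h) (hb0 h)) (Finset.mem_univ h)
    have h3 : 0 < A i h * b h := mul_pos (hApos i h hih) hh
    have h4 : 0 < c₂ * ∑ h, A i h * b h := mul_pos hc₂ (by linarith)
    linarith
  have heq : ∀ i, c₂ * (∑ h, A i h * b h) = c₁ * b i ^ (p - 1) := by
    intro i
    have hloc : IsLocalMax (fun t : ℝ => F (fun j => b j + t * (Pi.single i (1:ℝ) : ι → ℝ) j)) 0 := by
      have : ∀ᶠ t in nhds (0:ℝ), -b i < t := eventually_gt_nhds (by linarith [hpos i])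
      filter_upwards [this] with t ht
      simp only [zero_mul, add_zero]
      refine hmax _ fun j => ?_
      by_cases hj : j = i
      · subst hj; simp; linarith
      · simp [hj, hb0 j]
    have := hloc.hasDerivAt_eq_zero (hder i)
    linarith
  have hroot : ∀ x t : ℝ, 0 < x → 0 < t → x ≤ t ^ (p - 2) → x ^ (1 / (p - 2)) ≤ t := by
    intro x t hx ht h
    have := Real.rpow_le_rpow hx.le h (by positivity : 0 ≤ 1 / (p - 2))
    rwa [← Real.rpow_mul ht.le, mul_one_div_cancel hp2.ne', Real.rpow_one] at this
  have hroot' : ∀ x t : ℝ, 0 < x → 0 < t → t ^ (p - 2) ≤ x → t ≤ x ^ (1 / (p - 2)) := by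
    intro x t hx ht h
    have := Real.rpow_le_rpow (by positivity) h (by positivity : 0 ≤ 1 / (p - 2))
    rwa [← Real.rpow_mul ht.le, mul_one_div_cancel hp2.ne', Real.rpow_one] at this
  refine ⟨b, hpos, hmax, heq, fun i => ⟨?_, ?_⟩⟩
  · obtain ⟨i₀, hi₀⟩ := Finite.exists_min b
    refine le_trans ?_ (hi₀ i)
    refine hroot _ _ (by positivity) (hpos i₀) ?_
    obtain ⟨h, hh⟩ := hA1 i₀
    have h2 : A i₀ h * b h ≤ ∑ h, A i₀ h * b h :=
      Finset.single_le_sum (f := fun h => A i₀ h * b h) (fun h _ => mul_nonneg (hA i₀ h) (hb0 h)) (Finset.mem_univ h)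
    rw [hh, one_mul] at h2
    have h3 := heq i₀
    rw [hpow1 _ (hpos i₀)] at h3
    have h4 : b i₀ ≤ ∑ h, A i₀ h * b h := (hi₀ h).trans h2
    have h5 := mul_le_mul_of_nonneg_left h4 hc₂.le
    rw [div_le_iff₀ hc₁]
    refine le_of_mul_le_mul_right ?_ (hpos i₀)
    linarith
  · obtain ⟨i₀, hi₀⟩ := Finite.exists_max b
    refine le_trans (hi₀ i) ?_
    refine hroot' _ _ (by positivity) (hpos i₀) ?_
    have h3 := heq i₀
    rw [hpow1 _ (hpos i₀)] at h3
    have h4 : ∑ h, A i₀ h * b h ≤ S * b i₀ := by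
      calc _ ≤ ∑ h, A i₀ h * b i₀ := Finset.sum_le_sum fun h _ => mul_le_mul_of_nonneg_left (hi₀ h) (hA _ _)
        _ = (∑ h, A i₀ h) * b i₀ := by rw [Finset.sum_mul]
        _ ≤ _ := mul_le_mul_of_nonneg_right (hS i₀) (hb0 _)
    have h5 := mul_le_mul_of_nonneg_left h4 hc₂.le
    rw [le_div_iff₀ hc₁]
    refine le_of_mul_le_mul_right ?_ (hpos i₀)
    linarith

theorem aux_summable : Summable fun t : ℤ => ((1 + |(t:ℝ)|) ^ 2)⁻¹ := by
  have h : Summable fun t : ℕ => ((1 + |(t:ℝ)|) ^ 2)⁻¹ := by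
    have h1 : Summable fun t : ℕ => (((t:ℝ)) ^ 2)⁻¹ := Real.summable_nat_pow_inv.2 (by norm_num)
    have h2 := (summable_nat_add_iff 1).2 h1
    refine h2.congr fun t => ?_
    rw [abs_of_nonneg (by positivity)]; push_cast; ring
  refine Summable.of_nat_of_neg (by simpa using h) (by simpa using h)

theorem aux_rowsum (n k m : ℕ) (hkn : k ≤ n) (d γ : ℝ) (hd : 0 < d) (hγ : 2 * (k:ℝ) ≤ γ)
    (X : Fin ((m + 1) ^ k) → EuclideanSpace ℝ (Fin n)) (hX : latticeEnum n k m d X)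
    (A : Fin ((m + 1) ^ k) → Fin ((m + 1) ^ k) → ℝ)
    (hA : ∀ i h, A i h = if i = h then 0 else d ^ γ * ‖X i - X h‖ ^ (-γ)) (i : Fin ((m + 1) ^ k)) :
    ∑ h, A i h ≤ 4 ^ k * (∑' t : ℤ, ((1 + |(t:ℝ)|) ^ 2)⁻¹) ^ k := by
  classical
  obtain ⟨hinj, hq, -⟩ := hX
  choose q hq1 hq2 hq3 using hq
  set w : ℤ → ℝ := fun t => ((1 + |(t:ℝ)|) ^ 2)⁻¹ with hw
  have hw0 : ∀ t, 0 ≤ w t := fun t => by positivity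
  let v : Fin ((m + 1) ^ k) → Fin k → ℤ := fun h j => q i (Fin.castLE hkn j) - q h (Fin.castLE hkn j)
  have hvinj : Function.Injective v := by
    intro h h' hh
    apply hinj
    ext j
    rw [hq3, hq3]
    by_cases hj : (j:ℕ) < k
    · have := congrFun hh ⟨j, hj⟩
      simp only [v] at this
      have e : Fin.castLE hkn ⟨j, hj⟩ = j := rfl
      rw [e] at this
      have : q h j = q h' j := by omega
      rw [this]
    · rw [hq2 h j (not_lt.1 hj), hq2 h' j (not_lt.1 hj)]
  have hterm : ∀ h, A i h ≤ 4 ^ k * ∏ j, w (v h j) := by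
    intro h
    rw [hA]
    split_ifs with hih
    · exact mul_nonneg (by positivity) (Finset.prod_nonneg fun j _ => hw0 _)
    obtain ⟨r, hr⟩ : ∃ r, r = ‖X i - X h‖ / d := ⟨_, rfl⟩
    have hD : ‖X i - X h‖ = d * r := by rw [hr]; field_simp
    have hv : ∀ j, |((v h j : ℤ) : ℝ)| ≤ r := by
      intro j
      have h1 := PiLp.norm_apply_le (X i - X h) (Fin.castLE hkn j)
      rw [PiLp.sub_apply, hq3, hq3, ← mul_sub, Real.norm_eq_abs, abs_mul, abs_of_pos hd, hD] at h1
      have := le_of_mul_le_mul_left h1 hd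
      simpa [v] using this
    have hr1 : 1 ≤ r := by
      have h1 : v h ≠ v i := fun hh => hih (hvinj hh).symm
      obtain ⟨j, hj⟩ := Function.ne_iff.1 h1
      have h2 : v h j ≠ 0 := by simpa [v] using hj
      have h3 : (1:ℤ) ≤ |v h j| := Int.one_le_abs h2
      have h4 : (1:ℝ) ≤ |((v h j : ℤ) : ℝ)| := by exact_mod_cast h3
      exact h4.trans (hv j)
    have hr0 : 0 < r := by linarith
    have e1 : d ^ γ * ‖X i - X h‖ ^ (-γ) = r ^ (-γ) := by
      rw [hD, Real.mul_rpow hd.le hr0.le, ← mul_assoc, ← Real.rpow_add hd]; simp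
    rw [e1]
    have e2 : r ^ (-γ) ≤ (r ^ (2 * k))⁻¹ := by
      rw [Real.rpow_neg hr0.le]
      apply inv_anti₀ (by positivity)
      rw [← Real.rpow_natCast]
      exact Real.rpow_le_rpow_of_exponent_le hr1 (by push_cast; exact hγ)
    refine e2.trans ?_
    have e3 : ∏ j, (1 + |((v h j : ℤ) : ℝ)|) ^ 2 ≤ 4 ^ k * r ^ (2 * k) := by
      calc _ ≤ ∏ j : Fin k, (4 * r ^ 2) := by
            refine Finset.prod_le_prod (fun j _ => by positivity) fun j _ => ?_
            have := hv j
            have h0 := abs_nonneg ((v h j : ℤ) : ℝ)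
            nlinarith
        _ = _ := by simp [mul_pow, pow_mul]
    simp only [hw]
    rw [Finset.prod_inv_distrib, ← div_eq_mul_inv, inv_eq_one_div, div_le_div_iff₀ (by positivity)
      (Finset.prod_pos fun j _ => by positivity), one_mul]
    exact e3
  calc ∑ h, A i h ≤ ∑ h, 4 ^ k * ∏ j, w (v h j) := Finset.sum_le_sum fun h _ => hterm h
    _ = 4 ^ k * ∑ h, ∏ j, w (v h j) := by rw [Finset.mul_sum]
    _ ≤ 4 ^ k * ∑ u ∈ Fintype.piFinset (fun _ : Fin k => Finset.Icc (-(m:ℤ)) m), ∏ j, w (u j) := by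
        refine mul_le_mul_of_nonneg_left ?_ (by positivity)
        rw [← Finset.sum_image (s := Finset.univ) (g := v) (f := fun u => ∏ j, w (u j)) (fun _ _ _ _ hh => hvinj hh)]
        refine Finset.sum_le_sum_of_subset_of_nonneg ?_ fun u _ _ => Finset.prod_nonneg fun j _ => hw0 _
        intro u hu
        obtain ⟨h, -, rfl⟩ := Finset.mem_image.1 hu
        rw [Fintype.mem_piFinset]
        intro j
        have h1 := hq1 i (Fin.castLE hkn j) (by simp)
        have h2 := hq1 h (Fin.castLE hkn j) (by simp)
        simp only [v, Finset.mem_Icc]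
        omega
    _ = 4 ^ k * (∑ t ∈ Finset.Icc (-(m:ℤ)) m, w t) ^ k := by
        rw [← Finset.prod_univ_sum]; simp
    _ ≤ _ := by
        refine mul_le_mul_of_nonneg_left ?_ (by positivity)
        refine pow_le_pow_left₀ (Finset.sum_nonneg fun t _ => hw0 t) ?_ k
        exact aux_summable.sum_le_tsum _ fun t _ => hw0 t

theorem aux_neighbor (n k m : ℕ) (hkn : k ≤ n) (hk : 1 ≤ k) (hm : 1 ≤ m) (d γ : ℝ) (hd : 0 < d)
    (X : Fin ((m + 1) ^ k) → EuclideanSpace ℝ (Fin n)) (hX : latticeEnum n k m d X)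
    (A : Fin ((m + 1) ^ k) → Fin ((m + 1) ^ k) → ℝ)
    (hA : ∀ i h, A i h = if i = h then 0 else d ^ γ * ‖X i - X h‖ ^ (-γ)) (i : Fin ((m + 1) ^ k)) :
    ∃ h, A i h = 1 := by
  classical
  obtain ⟨hinj, hq, hq'⟩ := hX
  obtain ⟨q, hq1, hq2, hq3⟩ := hq i
  let j₀ : Fin n := ⟨0, by omega⟩
  obtain ⟨e, he, he1, he2⟩ : ∃ e : ℤ, |(e:ℝ)| = 1 ∧ 0 ≤ q j₀ + e ∧ q j₀ + e ≤ m := by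
    have := hq1 j₀ (by simp [j₀]; omega)
    by_cases h : q j₀ = 0
    · exact ⟨1, by simp, by omega, by omega⟩
    · exact ⟨-1, by simp, by omega, by omega⟩
  obtain ⟨h, hh⟩ := hq' (Function.update q j₀ (q j₀ + e)) (by
      intro j hj
      by_cases hjj : j = j₀
      · subst hjj; simp [he1, he2]
      · simp only [Function.update_of_ne hjj]; exact hq1 j hj) (by
      intro j hj
      have hjj : j ≠ j₀ := by rintro rfl; simp [j₀] at hj; omega
      simp only [Function.update_of_ne hjj]; exact hq2 j hj)
  have hX : X i - X h = EuclideanSpace.single j₀ (-(d * e)) := by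
    ext j
    rw [PiLp.sub_apply, hq3, hh]
    by_cases hjj : j = j₀
    · subst hjj; simp; ring
    · simp [hjj]
  have hnorm : ‖X i - X h‖ = d := by
    rw [hX]; simp [abs_mul, he, abs_of_pos hd]
  have hne : i ≠ h := by
    rintro rfl
    simp at hnorm; linarith
  refine ⟨h, ?_⟩
  rw [hA, if_neg hne, hnorm, ← Real.rpow_add hd]; simp

theorem stmt_19 (n k : ℕ) (s β c₁ c₂ : ℝ) (hn0 : 0 < n) (hs0 : 0 < s) (hs1 : s < 1)
    (hn : 2 * s + 2 < (n : ℝ)) (hk1 : 1 ≤ k) (hk2 : (k : ℝ) < ((n : ℝ) - 2 * s) / 2)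
    (hβ1 : (n : ℝ) - 2 * s < β) (hβ2 : β < (n : ℝ))
    (hc₁ : 0 < c₁) (hc₂ : 0 < c₂) :
    -- the bounds `C₁'`, `C₂'` are independent of `m` and `l`
    ∃ C₁' C₂' : ℝ, 0 < C₁' ∧ C₁' ≤ C₂' ∧
      ∀ m l : ℕ, 1 ≤ m → 1 ≤ l →
      ∀ lam : ℝ, lam = (l : ℝ) ^ (((n : ℝ) - 2 * s) / (β - (n : ℝ) + 2 * s)) →
      ∀ X : Fin ((m + 1) ^ k) → EuclideanSpace ℝ (Fin n), latticeEnum n k m (lam * l) X →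
      ∀ A : Fin ((m + 1) ^ k) → Fin ((m + 1) ^ k) → ℝ,
      (∀ i h, A i h = if i = h then 0 else
          (lam * l) ^ ((n : ℝ) - 2 * s) * ‖X i - X h‖ ^ (-((n : ℝ) - 2 * s))) →
      ∀ F : (Fin ((m + 1) ^ k) → ℝ) → ℝ,
      (∀ z, F z = c₂ / 2 * (∑ i, ∑ h, A i h * z i * z h) -
          (((n : ℝ) - 2 * s) * c₁ / (2 * β)) * ∑ h, z h ^ (2 * β / ((n : ℝ) - 2 * s))) →
      ∃ b : Fin ((m + 1) ^ k) → ℝ,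
        (∀ i, 0 < b i) ∧
        (∀ z : Fin ((m + 1) ^ k) → ℝ, (∀ i, 0 ≤ z i) → F z ≤ F b) ∧
        (∀ i, c₂ * (∑ h, A i h * b h) = c₁ * b i ^ (2 * β / ((n : ℝ) - 2 * s) - 1)) ∧
        (∀ i, C₁' ≤ b i ∧ b i ≤ C₂') := by
  have hγ0 : 0 < (n:ℝ) - 2 * s := by linarith
  have hk0 : (0:ℝ) ≤ (k:ℝ) := by positivity
  have hkn : k ≤ n := by
    have : (k:ℝ) ≤ n := by linarith
    exact_mod_cast this
  have hp : 2 < 2 * β / ((n:ℝ) - 2 * s) := by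
    rw [lt_div_iff₀ hγ0]; linarith
  have hT : 1 ≤ ∑' t : ℤ, ((1 + |(t:ℝ)|) ^ 2)⁻¹ := by
    have := aux_summable.le_tsum 0 (fun t _ => by positivity)
    simpa using this
  obtain ⟨S, hSdef⟩ : ∃ S : ℝ, S = 4 ^ k * (∑' t : ℤ, ((1 + |(t:ℝ)|) ^ 2)⁻¹) ^ k := ⟨_, rfl⟩
  have hS1 : 1 ≤ S := by
    rw [hSdef]
    exact one_le_mul_of_one_le_of_one_le (one_le_pow₀ (by norm_num)) (one_le_pow₀ hT)
  refine ⟨(c₂ / c₁) ^ (1 / (2 * β / ((n:ℝ) - 2 * s) - 2)),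
    (c₂ * S / c₁) ^ (1 / (2 * β / ((n:ℝ) - 2 * s) - 2)), by positivity, ?_, ?_⟩
  · refine Real.rpow_le_rpow (by positivity) ?_ ?_
    · gcongr
      nlinarith
    · exact one_div_nonneg.2 (by linarith)
  intro m l hm hl lam hlam X hX A hA F hF
  have hl0 : (0:ℝ) < l := by exact_mod_cast hl
  have hd : 0 < lam * l := by rw [hlam]; positivity
  have hXinj := hX.1
  have hApos : ∀ i h, i ≠ h → 0 < A i h := by
    intro i h hih
    rw [hA, if_neg hih]
    have : 0 < ‖X i - X h‖ := norm_pos_iff.2 (sub_ne_zero.2 fun hh => hih (hXinj hh))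
    positivity
  haveI : Nonempty (Fin ((m + 1) ^ k)) := ⟨⟨0, by positivity⟩⟩
  refine aux_main A ?_ ?_ hApos
    (aux_neighbor n k m hkn hk1 hm _ _ hd X hX A hA) S hS1 ?_ c₁ c₂ _ hp hc₁ hc₂ F ?_
  · intro i h
    rw [hA, hA, norm_sub_rev]
    simp only [eq_comm]
  · intro i h
    by_cases hih : i = h
    · rw [hA, if_pos hih]
    · exact (hApos i h hih).le
  · intro i
    rw [hSdef]
    exact aux_rowsum n k m hkn _ _ hd (by linarith) X hX A hA i
  · intro z
    rw [hF]
    have hβ0 : β ≠ 0 := by linarith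
    have : ((n : ℝ) - 2 * s) * c₁ / (2 * β) = c₁ / (2 * β / ((n : ℝ) - 2 * s)) := by
      field_simp
    rw [this]
end
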